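/- arXiv:2402.09829 — 2 statements merged into one kernel-verified Lean document; each statement's English description precedes it below -/
import Mathlib

section
/- Fix c with 1/2 ≤ c < 1. There exists a constant C > 0 such that for all sufficiently large x and every even integer h with 2 ≤ h < x^{1−c}: #{q : 2 < q < x/h, q prime, qh + 1 prime} ≤ 16·𝔖·∏_{p | h, p > 2}(1 + 1/(p − 2)) · (x/h)/(log(x/h))² · (1 + C·log log x/log x), where the product over p | h, p > 2 is 1 if h has no odd prime divisor. -/
open Real Finset

attribute [local instance] Classical.propDecidable

/-- The twin-prime constant `𝔖 = ∏_{p > 2 prime} (1 − 1/(p−1)²)`. -/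
noncomputable def twinConst : ℝ :=
  ∏' p : Nat.Primes, if 2 < (p : ℕ) then 1 - 1 / ((p : ℕ) - 1 : ℝ) ^ 2 else 1

/-!
The primes `q` with `qh + 1` prime survive in the sequence `n(nh + 1)` after sieving by the primes
up to `z`, and Selberg's sieve bounds the number of survivors among `n ≤ M` by `M / G`, up to a
remainder, where `G` is a sum over squarefree `l ≤ z`. Dropping the primes dividing `h` from the
density costs at most the factor `∏_{p ∣ h, p > 2} (1 + 1/(p - 2))`, so `h = 2` is the worst case.
There the density is `1/2` at `2` and `2/p` at odd `p`; its completely multiplicative extension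
`f(n)` collects, over the `n` with a given radical, less than the corresponding term of `G`, so `G`
is at least `∑_{n ≤ z} f(n)`. Finally `n f(n) = (b * χ * ζ)(n)`, with `χ` the indicator of odd
numbers and `∑ b(n)/n = 1/𝔖` absolutely convergent with a logarithm to spare, whence
`G ≥ (log² z - O(log z)) / (4𝔖)`; take `z = √M / (log M)³`.
-/

open ArithmeticFunction hiding log

open scoped ArithmeticFunction.Omega

open BoundingSieve

open UniqueFactorizationMonoid (radical radical_dvd_self)

open Polynomial (X C)

section SelbergSieve

variable (s t : BoundingSieve) (z d : ℕ)

/-- The divisors of the sifting product up to the level `z`, on which the Selberg weights live. -/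
def selbergSupport : Finset ℕ := {d ∈ s.prodPrimes.divisors | d ≤ z}

/-- The sum `G(z) = ∑_{l ≤ z} g(l)` of the Selberg terms; the main term of the sieve is its
inverse. -/
noncomputable def selbergSum : ℝ := ∑ l ∈ selbergSupport s z, s.selbergTerms l

/-- The Selberg weight `λ_d = μ(d) ν(d)⁻¹ G(z)⁻¹ ∑_{d ∣ l ≤ z} g(l)`, which minimises the main term
of the `Λ²` sieve subject to `λ_1 = 1`. It vanishes for `d > z`. -/
noncomputable def selbergWeight : ℝ :=
  moebius d * (s.nu d)⁻¹ * ((∑ l ∈ selbergSupport s z with d ∣ l, s.selbergTerms l) /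
    selbergSum s z)

variable {s t z d}

theorem mem_selbergSupport : d ∈ selbergSupport s z ↔ d ∣ s.prodPrimes ∧ d ≤ z := by
  simp [selbergSupport, prodPrimes_ne_zero]

theorem selbergSum_pos (hz : 1 ≤ z) : 0 < selbergSum s z :=
  sum_pos (fun _ hl ↦ selbergTerms_pos (mem_selbergSupport.1 hl).1)
    ⟨1, mem_selbergSupport.2 ⟨one_dvd _, hz⟩⟩

theorem selbergWeight_one (hz : 1 ≤ z) : selbergWeight s z 1 = 1 := by
  have hG : selbergSum s z ≠ 0 := (selbergSum_pos hz).ne'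
  simp only [selbergWeight, one_dvd, filter_true, ← selbergSum.eq_1, div_self hG]
  simp [s.nu_mult.map_one]

theorem selbergWeight_eq_zero (hd : z < d) : selbergWeight s z d = 0 := by
  have : {l ∈ selbergSupport s z | d ∣ l} = ∅ := filter_eq_empty_iff.2 fun l hl hdl ↦
    have := Nat.le_of_dvd (Nat.pos_of_dvd_of_pos (mem_selbergSupport.1 hl).1
      (Nat.pos_of_ne_zero prodPrimes_ne_zero)) hdl
    absurd (mem_selbergSupport.1 hl).2 (by lia)
  simp [selbergWeight, this]

theorem gcd_div_eq_of_squarefree {d e l : ℕ} (hl : Squarefree l) (hed : e ∣ d) (hdl : d ∣ l) :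
    (l / e).gcd d = d / e := by
  obtain ⟨f, rfl⟩ := hed
  obtain ⟨k, rfl⟩ := hdl
  rw [mul_assoc] at hl ⊢
  have he : 0 < e := Nat.pos_of_ne_zero (left_ne_zero_of_mul hl.ne_zero)
  rw [Nat.mul_div_cancel_left _ he, Nat.mul_div_cancel_left _ he,
    Nat.Coprime.gcd_mul_left_cancel_right _ (Nat.coprime_of_squarefree_mul hl),
    Nat.gcd_mul_right_left]

/-- The quotient `l / e` determines `e`, because `gcd (l / e) d = d / e`. -/
theorem injOn_div_of_squarefree {d : ℕ} (hd : d ≠ 0) :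
    Set.InjOn (fun x : ℕ × ℕ ↦ x.1 / x.2) {x | Squarefree x.1 ∧ x.2 ∣ d ∧ d ∣ x.1} := by
  rintro ⟨l, e⟩ ⟨hl, he, hdl⟩ ⟨l', e'⟩ ⟨hl', he', hdl'⟩ heq
  dsimp only at hl he hdl hl' he' hdl' heq
  have hde : d / e = d / e' := by
    rw [← gcd_div_eq_of_squarefree hl he hdl, ← gcd_div_eq_of_squarefree hl' he' hdl', heq]
  obtain rfl : e = e' := by rw [← Nat.div_div_self he hd, hde, Nat.div_div_self he' hd]
  rw [Prod.mk.injEq, ← Nat.div_mul_cancel (he.trans hdl), heq, Nat.div_mul_cancel (he.trans hdl')]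
  exact ⟨rfl, rfl⟩

theorem selbergTerms_div {e l : ℕ} (hl : l ∣ s.prodPrimes) (hel : e ∣ l) :
    s.selbergTerms (l / e) = s.selbergTerms l / s.selbergTerms e :=
  selbergTerms_isMultiplicative.map_div_of_coprime hel
    (Nat.coprime_of_squarefree_mul <|
      (Nat.div_mul_cancel hel).symm ▸ squarefree_of_dvd_prodPrimes hl)
    (selbergTerms_pos (hel.trans hl)).ne'

theorem sum_selbergTerms_multiples_le (hd : d ∣ s.prodPrimes) :
    ∑ l ∈ selbergSupport s z with d ∣ l, s.selbergTerms l ≤ s.nu d * selbergSum s z := by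
  set M : Finset ℕ := {l ∈ selbergSupport s z | d ∣ l} with hM
  have hinv : (s.nu d)⁻¹ = ∑ e ∈ d.divisors, (s.selbergTerms e)⁻¹ := by
    rw [nu_inv_eq_sum_divisors_inv_selbergTerms hd, ← sum_filter,
      Nat.divisors_filter_dvd_of_dvd prodPrimes_ne_zero hd]
  have mem_pairs {x : ℕ × ℕ} (hx : x ∈ M ×ˢ d.divisors) :
      (x.1 ∣ s.prodPrimes ∧ x.1 ≤ z) ∧ d ∣ x.1 ∧ x.2 ∣ d := by
    rw [mem_product, hM, mem_filter, mem_selbergSupport] at hx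
    exact ⟨hx.1.1, hx.1.2, Nat.dvd_of_mem_divisors hx.2⟩
  have hinj : Set.InjOn (fun x : ℕ × ℕ ↦ x.1 / x.2) (M ×ˢ d.divisors : Finset (ℕ × ℕ)) :=
    (injOn_div_of_squarefree (ne_zero_of_dvd_ne_zero prodPrimes_ne_zero hd)).mono <| by
      intro x hx
      have hx := mem_pairs hx
      exact ⟨squarefree_of_dvd_prodPrimes hx.1.1, hx.2.2, hx.2.1⟩
  rw [← inv_mul_le_iff₀ (nu_pos_of_dvd_prodPrimes hd)]
  calc (s.nu d)⁻¹ * ∑ l ∈ M, s.selbergTerms l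
      = ∑ x ∈ M ×ˢ d.divisors, s.selbergTerms (x.1 / x.2) := by
        rw [hinv, mul_comm, sum_mul_sum, ← sum_product']
        refine sum_congr rfl fun x hx ↦ ?_
        have hx := mem_pairs hx
        rw [selbergTerms_div hx.1.1 (hx.2.2.trans hx.2.1), div_eq_mul_inv]
    _ = ∑ m ∈ (M ×ˢ d.divisors).image (fun x ↦ x.1 / x.2), s.selbergTerms m :=
        (sum_image hinj).symm
    _ ≤ selbergSum s z := by
        refine sum_le_sum_of_subset_of_nonneg (image_subset_iff.2 fun x hx ↦ ?_)
          fun m hm _ ↦ (selbergTerms_pos (mem_selbergSupport.1 hm).1).le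
        have hx := mem_pairs hx
        exact mem_selbergSupport.2 ⟨(Nat.div_dvd_of_dvd (hx.2.2.trans hx.2.1)).trans hx.1.1,
          (Nat.div_le_self _ _).trans hx.1.2⟩

theorem abs_selbergWeight_le_one (hz : 1 ≤ z) (hd : d ∣ s.prodPrimes) :
    |selbergWeight s z d| ≤ 1 := by
  have hν := nu_pos_of_dvd_prodPrimes hd
  have hG := selbergSum_pos (s := s) hz
  have hμ : |(moebius d : ℝ)| ≤ 1 := mod_cast abs_moebius_le_one
  have hM : 0 ≤ ∑ l ∈ selbergSupport s z with d ∣ l, s.selbergTerms l :=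
    sum_nonneg fun l hl ↦ (selbergTerms_pos (mem_selbergSupport.1 (mem_filter.1 hl).1).1).le
  rw [selbergWeight, mul_assoc, abs_mul]
  refine mul_le_one₀ hμ (abs_nonneg _) ?_
  rw [abs_of_nonneg (by positivity), inv_mul_le_iff₀ hν, div_le_iff₀ hG, mul_one]
  exact sum_selbergTerms_multiples_le hd

theorem sum_moebius_divisors_filter_dvd {k l : ℕ} (hk : Squarefree k) :
    ∑ d ∈ k.divisors with l ∣ d, (moebius d : ℝ) = if l = k then (moebius l : ℝ) else 0 := by
  by_cases hlk : l ∣ k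
  · obtain ⟨m, rfl⟩ := hlk
    have hlm : l.Coprime m := Nat.coprime_of_squarefree_mul hk
    have hl : l ≠ 0 := left_ne_zero_of_mul hk.ne_zero
    have hm : m ≠ 0 := right_ne_zero_of_mul hk.ne_zero
    have himage : {d ∈ (l * m).divisors | l ∣ d} = m.divisors.image (l * ·) := by
      ext d
      simp only [mem_filter, Nat.mem_divisors, mem_image]
      constructor
      · rintro ⟨⟨hd, -⟩, e, rfl⟩
        exact ⟨e, ⟨Nat.dvd_of_mul_dvd_mul_left (Nat.pos_of_ne_zero hl) hd, hm⟩, rfl⟩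
      · rintro ⟨e, ⟨he, -⟩, rfl⟩
        exact ⟨⟨mul_dvd_mul_left l he, hk.ne_zero⟩, dvd_mul_right l e⟩
    have hone : ∑ e ∈ m.divisors, (moebius e : ℝ) = if m = 1 then 1 else 0 := by
      rw [← one_apply, ← coe_moebius_mul_coe_zeta, coe_mul_zeta_apply]
      rfl
    calc ∑ d ∈ (l * m).divisors with l ∣ d, (moebius d : ℝ)
        = ∑ e ∈ m.divisors, (moebius l : ℝ) * moebius e := by
          rw [himage, sum_image fun a _ b _ ↦ Nat.eq_of_mul_eq_mul_left (Nat.pos_of_ne_zero hl)]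
          refine sum_congr rfl fun e he ↦ ?_
          rw [isMultiplicative_moebius.map_mul_of_coprime
            (hlm.coprime_dvd_right (Nat.dvd_of_mem_divisors he)), Int.cast_mul]
      _ = _ := by simp [← mul_sum, hone, hl]
  · rw [filter_false_of_mem fun d hd hld ↦ hlk (hld.trans (Nat.dvd_of_mem_divisors hd)), sum_empty,
      if_neg (by rintro rfl; exact hlk dvd_rfl)]

theorem sum_nu_mul_selbergWeight {l : ℕ} (hl : l ∣ s.prodPrimes) :
    ∑ d ∈ s.prodPrimes.divisors with l ∣ d, s.nu d * selbergWeight s z d =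
      if l ≤ z then moebius l * s.selbergTerms l / selbergSum s z else 0 := by
  have hterm : ∀ d ∈ s.prodPrimes.divisors, s.nu d * selbergWeight s z d =
      (∑ k ∈ selbergSupport s z with d ∣ k, moebius d * s.selbergTerms k) / selbergSum s z := by
    intro d hd
    rw [selbergWeight, ← mul_sum]
    field_simp [nu_ne_zero (Nat.dvd_of_mem_divisors hd)]
  calc ∑ d ∈ s.prodPrimes.divisors with l ∣ d, s.nu d * selbergWeight s z d
      = (∑ k ∈ selbergSupport s z, (∑ d ∈ k.divisors with l ∣ d, (moebius d : ℝ)) *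
          s.selbergTerms k) / selbergSum s z := by
        rw [sum_congr rfl fun d hd ↦ hterm d (mem_filter.1 hd).1, ← sum_div]
        simp only [sum_mul]
        rw [sum_comm' fun d k ↦ ?_]
        simp only [mem_filter, Nat.mem_divisors, mem_selbergSupport]
        exact ⟨fun h ↦ ⟨⟨⟨h.2.2, ne_zero_of_dvd_ne_zero prodPrimes_ne_zero h.2.1.1⟩, h.1.2⟩, h.2.1⟩,
          fun h ↦ ⟨⟨⟨h.1.1.1.trans h.2.1, prodPrimes_ne_zero⟩, h.1.2⟩, h.2, h.1.1.1⟩⟩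
    _ = ∑ k ∈ selbergSupport s z, if l = k then moebius l * s.selbergTerms l / selbergSum s z
          else 0 := by
        rw [sum_div]
        refine sum_congr rfl fun k hk ↦ ?_
        rw [sum_moebius_divisors_filter_dvd
          (squarefree_of_dvd_prodPrimes (mem_selbergSupport.1 hk).1)]
        split_ifs with h <;> simp [h]
    _ = _ := by simp [mem_selbergSupport, hl]

theorem mainSum_lambdaSquared_selbergWeight (hz : 1 ≤ z) :
    s.mainSum (lambdaSquared (selbergWeight s z)) = (selbergSum s z)⁻¹ := by
  have hG := (selbergSum_pos (s := s) hz).ne'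
  have hterm : ∀ l ∈ s.prodPrimes.divisors, (s.selbergTerms l)⁻¹ *
      (∑ d ∈ s.prodPrimes.divisors, if l ∣ d then s.nu d * selbergWeight s z d else 0) ^ 2 =
      if l ≤ z then s.selbergTerms l / selbergSum s z ^ 2 else 0 := by
    intro l hl
    have hlP := Nat.dvd_of_mem_divisors hl
    have hg := (selbergTerms_pos hlP).ne'
    have hμ : (moebius l : ℝ) ^ 2 = 1 :=
      mod_cast moebius_sq_eq_one_of_squarefree (squarefree_of_dvd_prodPrimes hlP)
    rw [← sum_filter, sum_nu_mul_selbergWeight hlP]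
    split_ifs
    · rw [div_pow, mul_pow, hμ]
      field_simp
    · simp
  rw [mainSum_lambdaSquared_eq_sum_mul_sum_sq, sum_congr rfl hterm, ← sum_filter, ← sum_div,
    ← selbergSupport, ← selbergSum]
  field_simp

theorem abs_lambdaSquared_selbergWeight_le (hz : 1 ≤ z) (hd : d ∣ s.prodPrimes) :
    |lambdaSquared (selbergWeight s z) d| ≤
      #{x ∈ selbergSupport s z ×ˢ selbergSupport s z | x.1.lcm x.2 = d} := by
  set A := {x ∈ selbergSupport s z ×ˢ selbergSupport s z | x.1.lcm x.2 = d}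
  set w := selbergWeight s z
  have hterm : ∀ x ∈ d.divisors ×ˢ d.divisors,
      |if d = x.1.lcm x.2 then w x.1 * w x.2 else 0| ≤ if x ∈ A then 1 else 0 := by
    intro x hx
    have hx₁ := (Nat.dvd_of_mem_divisors (mem_product.1 hx).1).trans hd
    have hx₂ := (Nat.dvd_of_mem_divisors (mem_product.1 hx).2).trans hd
    by_cases hxA : x ∈ A
    · rw [if_pos hxA]
      split_ifs
      · rw [abs_mul]
        exact mul_le_one₀ (abs_selbergWeight_le_one hz hx₁) (abs_nonneg _)
          (abs_selbergWeight_le_one hz hx₂)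
      · simp
    · rw [if_neg hxA, abs_nonpos_iff]
      refine ite_eq_right_iff.2 fun hlcm ↦ mul_eq_zero.2 ?_
      simp only [A, mem_filter, mem_product, mem_selbergSupport, hx₁, hx₂, hlcm.symm, true_and,
        and_true, not_and_or, not_le] at hxA
      exact hxA.imp selbergWeight_eq_zero selbergWeight_eq_zero
  calc |lambdaSquared w d|
      = |∑ x ∈ d.divisors ×ˢ d.divisors, if d = x.1.lcm x.2 then w x.1 * w x.2 else 0| := by
        rw [lambdaSquared, ← sum_product']
    _ ≤ ∑ x ∈ d.divisors ×ˢ d.divisors, if x ∈ A then (1 : ℝ) else 0 :=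
        (abs_sum_le_sum_abs _ _).trans (sum_le_sum hterm)
    _ ≤ #A := by
        rw [sum_boole]
        exact mod_cast card_le_card fun x hx ↦ (mem_filter.1 hx).2

theorem errSum_lambdaSquared_selbergWeight_le (hz : 1 ≤ z) :
    s.errSum (lambdaSquared (selbergWeight s z)) ≤
      ∑ x ∈ selbergSupport s z ×ˢ selbergSupport s z, |s.rem (x.1.lcm x.2)| := by
  set D := selbergSupport s z
  have hlcm : ∀ x ∈ D ×ˢ D, x.1.lcm x.2 ∈ s.prodPrimes.divisors := fun x hx ↦
    have hx := mem_product.1 hx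
    Nat.mem_divisors.2 ⟨Nat.lcm_dvd (mem_selbergSupport.1 hx.1).1 (mem_selbergSupport.1 hx.2).1,
      prodPrimes_ne_zero⟩
  calc s.errSum (lambdaSquared (selbergWeight s z))
      ≤ ∑ d ∈ s.prodPrimes.divisors, #{x ∈ D ×ˢ D | x.1.lcm x.2 = d} * |s.rem d| :=
        sum_le_sum fun d hd ↦ mul_le_mul_of_nonneg_right
          (abs_lambdaSquared_selbergWeight_le hz (Nat.dvd_of_mem_divisors hd)) (abs_nonneg _)
    _ = ∑ x ∈ D ×ˢ D, |s.rem (x.1.lcm x.2)| := by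
        rw [← sum_fiberwise_of_maps_to hlcm]
        refine sum_congr rfl fun d _ ↦ ?_
        rw [sum_congr rfl fun x hx ↦ by rw [(mem_filter.1 hx).2], sum_const, nsmul_eq_mul]

theorem siftedSum_le_totalMass_div_selbergSum_add (hz : 1 ≤ z) :
    s.siftedSum ≤ s.totalMass / selbergSum s z +
      ∑ x ∈ selbergSupport s z ×ˢ selbergSupport s z, |s.rem (x.1.lcm x.2)| := by
  have h := siftedSum_le_mainSum_errSum_of_upperMoebius (s := s) _
    (upperMoebius_lambdaSquared (selbergWeight s z) (selbergWeight_one hz))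
  rw [mainSum_lambdaSquared_selbergWeight hz, ← div_eq_mul_inv] at h
  exact h.trans (by gcongr; exact errSum_lambdaSquared_selbergWeight_le hz)

theorem selbergTerms_prime {p : ℕ} (hp : p.Prime) : s.selbergTerms p = s.nu p / (1 - s.nu p) := by
  rw [selbergTerms_apply, hp.primeFactors, prod_singleton, div_eq_mul_inv]

theorem selbergTerms_eq_prod {d : ℕ} (hd : d ∣ s.prodPrimes) :
    s.selbergTerms d = ∏ p ∈ d.primeFactors, s.selbergTerms p := by
  rw [← selbergTerms_isMultiplicative.map_prod_of_subset_primeFactors _ _ subset_rfl,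
    Nat.prod_primeFactors_of_squarefree (squarefree_of_dvd_prodPrimes hd)]

variable (s t) in
/-- The multiplicative function `r` with `g_t(d) = g_s(d) ∑_{e ∣ d} r(e)` for squarefree `d`, which
compares the Selberg terms of two sieves. -/
noncomputable def selbergRatio : ArithmeticFunction ℝ :=
  prodPrimeFactors fun p ↦ t.selbergTerms p / s.selbergTerms p - 1

theorem selbergRatio_isMultiplicative : (selbergRatio s t).IsMultiplicative :=
  IsMultiplicative.prodPrimeFactors _

theorem selbergRatio_prime {p : ℕ} (hp : p.Prime) :
    selbergRatio s t p = t.selbergTerms p / s.selbergTerms p - 1 := by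
  rw [selbergRatio, prodPrimeFactors_apply hp.ne_zero, hp.primeFactors, prod_singleton]

theorem selbergTerms_mul_sum_selbergRatio (hP : s.prodPrimes = t.prodPrimes)
    (hd : d ∣ s.prodPrimes) :
    s.selbergTerms d * ∑ e ∈ d.divisors, selbergRatio s t e = t.selbergTerms d := by
  rw [← selbergRatio_isMultiplicative.prodPrimeFactors_one_add_of_squarefree
      (squarefree_of_dvd_prodPrimes hd),
    selbergTerms_eq_prod hd, selbergTerms_eq_prod (hP ▸ hd), ← prod_mul_distrib]
  refine prod_congr rfl fun p hp ↦ ?_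
  have := (selbergTerms_pos ((Nat.dvd_of_mem_primeFactors hp).trans hd)).ne'
  rw [selbergRatio_prime (Nat.prime_of_mem_primeFactors hp)]
  field_simp
  ring

theorem selbergRatio_nonneg (hP : s.prodPrimes = t.prodPrimes)
    (hν : ∀ p, p.Prime → p ∣ s.prodPrimes → s.nu p ≤ t.nu p) (hd : d ∣ s.prodPrimes) :
    0 ≤ selbergRatio s t d := by
  rw [selbergRatio, prodPrimeFactors_apply (ne_zero_of_dvd_ne_zero prodPrimes_ne_zero hd)]
  refine prod_nonneg fun p hp ↦ ?_
  have hpp := Nat.prime_of_mem_primeFactors hp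
  have hpP := (Nat.dvd_of_mem_primeFactors hp).trans hd
  have hs := s.nu_pos_of_prime p hpp hpP
  have ht := t.nu_lt_one_of_prime p hpp (hP ▸ hpP)
  have hle := hν p hpp hpP
  rw [sub_nonneg, one_le_div (selbergTerms_pos hpP), selbergTerms_prime hpp, selbergTerms_prime hpp]
  gcongr
  linarith

theorem one_add_selbergRatio_mul_nu (hP : s.prodPrimes = t.prodPrimes) {p : ℕ} (hp : p.Prime)
    (hpP : p ∣ s.prodPrimes) :
    1 + selbergRatio s t p * s.nu p = (1 - s.nu p) / (1 - t.nu p) := by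
  have := (s.nu_pos_of_prime p hp hpP).ne'
  have := (sub_pos.2 (s.nu_lt_one_of_prime p hp hpP)).ne'
  have := (sub_pos.2 (t.nu_lt_one_of_prime p hp (hP ▸ hpP))).ne'
  rw [selbergRatio_prime hp, selbergTerms_prime hp, selbergTerms_prime hp]
  field_simp
  ring

theorem selbergSum_le_mul_prod (hP : s.prodPrimes = t.prodPrimes)
    (hν : ∀ p, p.Prime → p ∣ s.prodPrimes → s.nu p ≤ t.nu p) :
    selbergSum t z ≤
      selbergSum s z * ∏ p ∈ s.prodPrimes.primeFactors, (1 - s.nu p) / (1 - t.nu p) := by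
  have hD : selbergSupport t z = selbergSupport s z := by rw [selbergSupport, selbergSupport, hP]
  calc selbergSum t z
      = ∑ d ∈ selbergSupport s z, ∑ e ∈ d.divisors, selbergRatio s t e * s.selbergTerms d := by
        rw [selbergSum, hD]
        refine sum_congr rfl fun d hd ↦ ?_
        rw [← selbergTerms_mul_sum_selbergRatio hP (mem_selbergSupport.1 hd).1, mul_comm, sum_mul]
    _ = ∑ e ∈ s.prodPrimes.divisors, selbergRatio s t e *
          ∑ d ∈ selbergSupport s z with e ∣ d, s.selbergTerms d := by
        simp only [mul_sum]
        refine sum_comm' fun d e ↦ ?_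
        simp only [mem_filter, Nat.mem_divisors, mem_selbergSupport]
        exact ⟨fun h ↦ ⟨⟨h.1, h.2.1⟩, h.2.1.trans h.1.1, prodPrimes_ne_zero⟩,
          fun h ↦ ⟨h.1.1, h.1.2, ne_zero_of_dvd_ne_zero prodPrimes_ne_zero h.1.1.1⟩⟩
    _ ≤ ∑ e ∈ s.prodPrimes.divisors, selbergRatio s t e * (s.nu e * selbergSum s z) :=
        sum_le_sum fun e he ↦
          have he := Nat.dvd_of_mem_divisors he
          mul_le_mul_of_nonneg_left (sum_selbergTerms_multiples_le he)
            (selbergRatio_nonneg hP hν he)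
    _ = selbergSum s z * ∑ e ∈ s.prodPrimes.divisors, (selbergRatio s t).pmul s.nu e := by
        rw [mul_sum]
        exact sum_congr rfl fun e _ ↦ by rw [pmul_apply]; ring
    _ = _ := by
        rw [← (selbergRatio_isMultiplicative.pmul
          s.nu_mult).prodPrimeFactors_one_add_of_squarefree s.prodPrimes_squarefree]
        congr 1
        exact prod_congr rfl fun p hp ↦ one_add_selbergRatio_mul_nu hP
          (Nat.prime_of_mem_primeFactors hp) (Nat.dvd_of_mem_primeFactors hp)

end SelbergSieve

section RadicalFibres

variable {f : ℕ →* ℝ} {z : ℕ}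

theorem sum_radical_eq_le_mul_prod (hf₀ : ∀ n, 0 ≤ f n) (hf₁ : ∀ p, p.Prime → f p < 1) {l : ℕ}
    (hl : l ≠ 0) :
    ∑ n ∈ Ioc 0 z with radical n = l, f n ≤ f l * ∏ p ∈ l.primeFactors, (1 - f p)⁻¹ := by
  set S := {n ∈ Ioc 0 z | radical n = l}
  have hdvd : ∀ n ∈ S, l ∣ n := fun n hn ↦ (mem_filter.1 hn).2 ▸ radical_dvd_self
  have hinj : Set.InjOn (· / l) (S : Set ℕ) := fun a ha b hb hab ↦ by
    rw [← Nat.div_mul_cancel (hdvd a ha), ← Nat.div_mul_cancel (hdvd b hb)]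
    exact congrArg (· * l) hab
  have hfactored : ∀ n ∈ S, n / l ∈ Nat.factoredNumbers l.primeFactors := by
    intro n hn
    have hn₀ : n ≠ 0 := (mem_Ioc.1 (mem_filter.1 hn).1).1.ne'
    have hpf : n.primeFactors = l.primeFactors := by
      rw [← Nat.primeFactors_radical, (mem_filter.1 hn).2]
    have hdiv₀ : n / l ≠ 0 := (Nat.div_ne_zero_iff_of_dvd (hdvd n hn)).2 ⟨hn₀, hl⟩
    exact Nat.mem_factoredNumbers_of_primeFactors_subset hdiv₀
      (hpf ▸ Nat.primeFactors_mono (Nat.div_dvd_of_dvd (hdvd n hn)) hn₀)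
  have heuler : HasSum ((Nat.factoredNumbers l.primeFactors).indicator f)
      (∏ p ∈ l.primeFactors, (1 - f p)⁻¹) := by
    have h := (EulerProduct.summable_and_hasSum_factoredNumbers_prod_filter_prime_geometric
      (f := f) (fun {p} hp ↦ by rw [norm_of_nonneg (hf₀ p)]; exact hf₁ p hp) l.primeFactors).2
    rw [filter_true_of_mem fun p hp ↦ Nat.prime_of_mem_primeFactors hp] at h
    exact hasSum_subtype_iff_indicator.1 h
  calc ∑ n ∈ S, f n
      = f l * ∑ n ∈ S, (Nat.factoredNumbers l.primeFactors).indicator f (n / l) := by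
        rw [mul_sum]
        refine sum_congr rfl fun n hn ↦ ?_
        rw [Set.indicator_of_mem (hfactored n hn), ← map_mul, Nat.mul_div_cancel' (hdvd n hn)]
    _ = f l * ∑ m ∈ S.image (· / l), (Nat.factoredNumbers l.primeFactors).indicator f m := by
        rw [sum_image hinj]
    _ ≤ f l * ∏ p ∈ l.primeFactors, (1 - f p)⁻¹ := by
        gcongr
        · exact hf₀ l
        · exact sum_le_hasSum _ (fun m _ ↦ Set.indicator_nonneg (fun n _ ↦ hf₀ n) m) heuler

theorem sum_Ioc_le_selbergSum {s : BoundingSieve} (hf₀ : ∀ n, 0 ≤ f n)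
    (hf₁ : ∀ p, p.Prime → f p < 1) (hf : ∀ p, p.Prime → p ≤ z → f p = s.nu p)
    (hP : ∀ p, p.Prime → p ≤ z → p ∣ s.prodPrimes) :
    ∑ n ∈ Ioc 0 z, f n ≤ selbergSum s z := by
  have hmaps : ∀ n ∈ Ioc 0 z, radical n ∈ selbergSupport s z := by
    intro n hn
    have hn := mem_Ioc.1 hn
    refine mem_selbergSupport.2
      ⟨?_, (Nat.le_of_dvd hn.1 radical_dvd_self).trans hn.2⟩
    rw [Nat.radical_eq_prod_primeFactors]
    refine Finset.prod_primes_dvd _ (fun p hp ↦ (Nat.prime_of_mem_primeFactors hp).prime)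
      fun p hp ↦
        hP p (Nat.prime_of_mem_primeFactors hp) ((Nat.le_of_mem_primeFactors hp).trans hn.2)
  rw [← sum_fiberwise_of_maps_to hmaps]
  refine sum_le_sum fun l hl ↦ ?_
  have hl := mem_selbergSupport.1 hl
  have hl₀ : l ≠ 0 := ne_zero_of_dvd_ne_zero prodPrimes_ne_zero hl.1
  have hfν : ∀ p ∈ l.primeFactors, f p = s.nu p := fun p hp ↦
    hf p (Nat.prime_of_mem_primeFactors hp) ((Nat.le_of_mem_primeFactors hp).trans hl.2)
  have hfl : f l = s.nu l := by
    rw [← prod_primeFactors_nu hl.1, ← prod_congr rfl hfν, ← map_prod,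
      Nat.prod_primeFactors_of_squarefree (squarefree_of_dvd_prodPrimes hl.1)]
  refine (sum_radical_eq_le_mul_prod hf₀ hf₁ hl₀).trans_eq ?_
  rw [selbergTerms_apply, hfl]
  exact congrArg _ (prod_congr rfl fun p hp ↦ by rw [hfν p hp])

end RadicalFibres

section RootCount

variable (F : Polynomial ℤ)

/-- The absolute value `|F(n)|`, as the sieve acts on natural numbers. -/
def absEval (n : ℕ) : ℕ := (F.eval (n : ℤ)).natAbs

/-- The number `ρ(d)` of roots of `F` modulo `d`. -/
noncomputable def rootCount : ArithmeticFunction ℕ :=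
  ⟨fun d ↦ #{r ∈ range d | d ∣ absEval F r}, by simp⟩

variable {F}

theorem rootCount_apply (d : ℕ) : rootCount F d = #{r ∈ range d | d ∣ absEval F r} := rfl

theorem dvd_absEval_iff_of_modEq {d a b : ℕ} (h : a ≡ b [MOD d]) :
    d ∣ absEval F a ↔ d ∣ absEval F b := by
  rw [absEval, absEval, ← Int.natCast_dvd, ← Int.natCast_dvd]
  exact dvd_iff_dvd_of_dvd_sub <| (Int.modEq_iff_dvd.1 (Int.natCast_modEq_iff.2 h).symm).trans
      (Polynomial.sub_dvd_eval_sub _ _ F)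

theorem rootCount_isMultiplicative : (rootCount F).IsMultiplicative := by
  refine IsMultiplicative.iff_ne_zero.2 ⟨by simp [rootCount_apply], fun {m n} hm hn hmn ↦ ?_⟩
  rw [rootCount_apply, rootCount_apply, rootCount_apply, ← card_product]
  refine card_nbij' (fun r ↦ (r % m, r % n)) (fun x ↦ Nat.chineseRemainder hmn x.1 x.2) ?_ ?_ ?_ ?_
  · intro r hr
    obtain ⟨-, hdvd⟩ := mem_filter.1 hr
    simp only [coe_product, Set.mem_prod, mem_coe, mem_filter, mem_range]
    exact ⟨⟨Nat.mod_lt _ (Nat.pos_of_ne_zero hm),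
        (dvd_absEval_iff_of_modEq (Nat.mod_modEq r m)).2 (dvd_of_mul_right_dvd hdvd)⟩,
      ⟨Nat.mod_lt _ (Nat.pos_of_ne_zero hn),
        (dvd_absEval_iff_of_modEq (Nat.mod_modEq r n)).2 (dvd_of_mul_left_dvd hdvd)⟩⟩
  · rintro ⟨a, b⟩ hab
    simp only [coe_product, Set.mem_prod, mem_coe, mem_filter, mem_range] at hab
    refine mem_filter.2 ⟨mem_range.2 (Nat.chineseRemainder_lt_mul hmn a b hm hn), ?_⟩
    obtain ⟨ha, hb⟩ := (Nat.chineseRemainder hmn a b).2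
    exact hmn.mul_dvd_of_dvd_of_dvd
      ((dvd_absEval_iff_of_modEq ha).2 hab.1.2) ((dvd_absEval_iff_of_modEq hb).2 hab.2.2)
  · intro r hr
    obtain ⟨ha, hb⟩ := (Nat.chineseRemainder hmn (r % m) (r % n)).2
    exact Nat.ModEq.eq_of_lt_of_lt ((Nat.modEq_and_modEq_iff_modEq_mul hmn).1
      ⟨ha.trans (Nat.mod_modEq r m), hb.trans (Nat.mod_modEq r n)⟩)
      (Nat.chineseRemainder_lt_mul hmn _ _ hm hn) (mem_range.1 (mem_filter.1 hr).1)
  · rintro ⟨a, b⟩ hab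
    simp only [coe_product, Set.mem_prod, mem_coe, mem_filter, mem_range] at hab
    obtain ⟨ha, hb⟩ := (Nat.chineseRemainder hmn a b).2
    exact Prod.ext (Nat.mod_eq_of_modEq ha hab.1.1) (Nat.mod_eq_of_modEq hb hab.2.1)

theorem abs_card_Ioc_filter_modEq_sub_le (M r : ℕ) {d : ℕ} (hd : 0 < d) :
    |(#{n ∈ Ioc 0 M | n ≡ r [MOD d]} : ℝ) - M / d| ≤ 1 := by
  have hcard := Nat.Ioc_filter_modEq_card 0 M hd r
  set u : ℚ := ((M : ℚ) - r) / d
  set v : ℚ := (((0 : ℕ) : ℚ) - r) / d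
  have huv : u - v = M / d := by simp only [u, v]; push_cast; ring
  have hnn : (0 : ℚ) ≤ M / d := by positivity
  have hcard' : (#{n ∈ Ioc 0 M | n ≡ r [MOD d]} : ℚ) = max ((⌊u⌋ : ℚ) - ⌊v⌋) 0 := by
    exact_mod_cast hcard
  have key : |(#{n ∈ Ioc 0 M | n ≡ r [MOD d]} : ℚ) - M / d| ≤ 1 := by
    have := Int.floor_le u
    have := Int.lt_floor_add_one u
    have := Int.floor_le v
    have := Int.lt_floor_add_one v
    rw [hcard', abs_le]
    constructor
    · linarith [le_max_left ((⌊u⌋ : ℚ) - ⌊v⌋) 0]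
    · linarith [max_le (a := (⌊u⌋ : ℚ) - ⌊v⌋) (b := 0) (c := M / d + 1) (by linarith) (by linarith)]
  simpa only [Rat.cast_abs, Rat.cast_sub, Rat.cast_div, Rat.cast_natCast, Rat.cast_one]
    using (Rat.cast_le (K := ℝ)).2 key

theorem abs_card_Ioc_filter_dvd_absEval_sub_le (M : ℕ) {d : ℕ} (hd : 0 < d) :
    |(#{n ∈ Ioc 0 M | d ∣ absEval F n} : ℝ) - rootCount F d / d * M| ≤
      rootCount F d := by
  set R : Finset ℕ := {r ∈ range d | d ∣ absEval F r}
  have hmaps : ∀ n ∈ ({n ∈ Ioc 0 M | d ∣ absEval F n} : Finset ℕ), n % d ∈ R :=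
    fun n hn ↦ mem_filter.2 ⟨mem_range.2 (Nat.mod_lt n hd),
      (dvd_absEval_iff_of_modEq (Nat.mod_modEq n d)).2 (mem_filter.1 hn).2⟩
  have hfibre : ∀ r ∈ R, {n ∈ {n ∈ Ioc 0 M | d ∣ absEval F n} | n % d = r} =
      {n ∈ Ioc 0 M | n ≡ r [MOD d]} := by
    intro r hr
    obtain ⟨hrd, hdvd⟩ := mem_filter.1 hr
    rw [filter_filter]
    refine filter_congr fun n _ ↦ ?_
    rw [Nat.ModEq, Nat.mod_eq_of_lt (mem_range.1 hrd)]
    refine and_iff_right_of_imp fun hn ↦ (dvd_absEval_iff_of_modEq ?_).1 hdvd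
    exact (hn ▸ Nat.mod_modEq n d :)
  rw [card_eq_sum_card_fiberwise hmaps, sum_congr rfl fun r hr ↦ by rw [hfibre r hr]]
  calc |((∑ r ∈ R, #{n ∈ Ioc 0 M | n ≡ r [MOD d]} : ℕ) : ℝ) - rootCount F d / d * M|
      = |∑ r ∈ R, ((#{n ∈ Ioc 0 M | n ≡ r [MOD d]} : ℝ) - M / d)| := by
        rw [sum_sub_distrib, sum_const, nsmul_eq_mul, rootCount_apply, Nat.cast_sum]
        congr 2
        ring
    _ ≤ ∑ r ∈ R, 1 := (abs_sum_le_sum_abs _ _).trans <|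
        sum_le_sum fun r _ ↦ abs_card_Ioc_filter_modEq_sub_le M r hd
    _ = rootCount F d := by rw [sum_const, nsmul_one, rootCount_apply]

end RootCount

section PolynomialSieve

/-- The sieve by the primes dividing `P` of the values `|F(1)|, …, |F(M)|`, each weighted by the
number of times it is taken. -/
noncomputable def polynomialSieve (F : Polynomial ℤ) (M P : ℕ) (hP : Squarefree P)
    (hF : ∀ p, p.Prime → p ∣ P → 0 < rootCount F p ∧ rootCount F p < p) : BoundingSieve where
  support := (Ioc 0 M).image (absEval F)
  prodPrimes := P
  prodPrimes_squarefree := hP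
  weights v := #{n ∈ Ioc 0 M | absEval F n = v}
  weights_nonneg _ := Nat.cast_nonneg _
  totalMass := M
  nu := (rootCount F : ArithmeticFunction ℝ).pdiv (ArithmeticFunction.id : ArithmeticFunction ℝ)
  nu_mult := rootCount_isMultiplicative.natCast.pdiv isMultiplicative_id.natCast
  nu_pos_of_prime p hp hpP := by
    have := (hF p hp hpP).1
    have := hp.pos
    simp only [pdiv_apply, natCoe_apply, id_apply]
    positivity
  nu_lt_one_of_prime p hp hpP := by
    have := hp.pos
    simp only [pdiv_apply, natCoe_apply, id_apply]
    rw [div_lt_one (by positivity)]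
    exact_mod_cast (hF p hp hpP).2

variable {F : Polynomial ℤ} {M P : ℕ} {hP : Squarefree P}
  {hF : ∀ p, p.Prime → p ∣ P → 0 < rootCount F p ∧ rootCount F p < p}

theorem polynomialSieve_nu (d : ℕ) :
    (polynomialSieve F M P hP hF).nu d = rootCount F d / d := by
  simp [polynomialSieve, pdiv_apply]

theorem sum_weights_polynomialSieve (q : ℕ → Prop) [DecidablePred q] :
    ∑ v ∈ (polynomialSieve F M P hP hF).support with q v,
      (polynomialSieve F M P hP hF).weights v =
      #{n ∈ Ioc 0 M | q (absEval F n)} := by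
  rw [card_eq_sum_card_fiberwise (f := absEval F)
    (t := {v ∈ (polynomialSieve F M P hP hF).support | q v})]
  · push_cast
    refine sum_congr rfl fun v hv ↦ ?_
    rw [filter_filter]
    rw [filter_congr (q := fun n ↦ absEval F n = v)
      fun n _ ↦ ⟨And.right, fun h ↦ ⟨h ▸ (mem_filter.1 hv).2, h⟩⟩]
    rfl
  · intro n hn
    obtain ⟨hn, hq⟩ := mem_filter.1 hn
    exact mem_filter.2 ⟨mem_image_of_mem _ hn, hq⟩

theorem siftedSum_polynomialSieve :
    (polynomialSieve F M P hP hF).siftedSum =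
      #{n ∈ Ioc 0 M | P.Coprime (absEval F n)} := by
  rw [siftedSum, ← sum_weights_polynomialSieve, sum_filter]
  rfl

theorem abs_rem_polynomialSieve_le {d : ℕ} (hd : d ∣ P) :
    |(polynomialSieve F M P hP hF).rem d| ≤ rootCount F d := by
  have hd₀ : 0 < d := Nat.pos_of_ne_zero (ne_zero_of_dvd_ne_zero hP.ne_zero hd)
  rw [rem, multSum, ← sum_filter, sum_weights_polynomialSieve, polynomialSieve_nu]
  exact abs_card_Ioc_filter_dvd_absEval_sub_le M hd₀

theorem rootCount_eq_prod {d : ℕ} (hd : Squarefree d) :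
    rootCount F d = ∏ p ∈ d.primeFactors, rootCount F p := by
  rw [← rootCount_isMultiplicative.map_prod_of_subset_primeFactors _ _ subset_rfl,
    Nat.prod_primeFactors_of_squarefree hd]

theorem rootCount_lcm_le {d e : ℕ} (h : 0 < rootCount F (d.gcd e)) :
    rootCount F (d.lcm e) ≤ rootCount F d * rootCount F e := by
  rw [← rootCount_isMultiplicative.lcm_apply_mul_gcd_apply]
  exact Nat.le_mul_of_pos_right _ h

theorem card_coprime_absEval_le {z : ℕ} (hz : 1 ≤ z) :
    (#{n ∈ Ioc 0 M | P.Coprime (absEval F n)} : ℝ) ≤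
      M / selbergSum (polynomialSieve F M P hP hF) z +
        (∑ d ∈ selbergSupport (polynomialSieve F M P hP hF) z, (rootCount F d : ℝ)) ^ 2 := by
  set s := polynomialSieve F M P hP hF
  have hrem : ∀ x ∈ selbergSupport s z ×ˢ selbergSupport s z,
      |s.rem (x.1.lcm x.2)| ≤ rootCount F x.1 * rootCount F x.2 := by
    intro x hx
    have hd : x.1 ∣ P := (mem_selbergSupport.1 (mem_product.1 hx).1).1
    have he : x.2 ∣ P := (mem_selbergSupport.1 (mem_product.1 hx).2).1
    have hgcd : x.1.gcd x.2 ∣ P := (Nat.gcd_dvd_left _ _).trans hd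
    have hpos : 0 < rootCount F (x.1.gcd x.2) := by
      rw [rootCount_eq_prod (hP.squarefree_of_dvd hgcd)]
      exact prod_pos fun p hp ↦ (hF p (Nat.prime_of_mem_primeFactors hp)
        ((Nat.dvd_of_mem_primeFactors hp).trans hgcd)).1
    exact (abs_rem_polynomialSieve_le (Nat.lcm_dvd hd he)).trans
      (mod_cast rootCount_lcm_le hpos)
  rw [← siftedSum_polynomialSieve (hP := hP) (hF := hF), sq, sum_mul_sum, ← sum_product']
  refine (siftedSum_le_totalMass_div_selbergSum_add hz).trans ?_
  exact add_le_add_right (sum_le_sum hrem) _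

end PolynomialSieve

section PrimePairs

/-- The polynomial `n(nh + 1)`, whose values have no small prime factor when `n` and `nh + 1` are
large primes. -/
noncomputable def pairPoly (h : ℕ) : Polynomial ℤ := X * (C (h : ℤ) * X + 1)

variable {h p M z : ℕ}

theorem absEval_pairPoly (n : ℕ) : absEval (pairPoly h) n = n * (n * h + 1) := by
  have : (pairPoly h).eval (n : ℤ) = ((n * (n * h + 1) : ℕ) : ℤ) := by
    simp [pairPoly, mul_comm]
  rw [absEval, this, Int.natAbs_natCast]

theorem rootCount_pairPoly_of_dvd (hp : p.Prime) (hph : p ∣ h) :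
    rootCount (pairPoly h) p = 1 := by
  have : {r ∈ range p | p ∣ absEval (pairPoly h) r} = {0} := by
    ext r
    simp only [absEval_pairPoly, hp.dvd_mul, Nat.dvd_add_right (hph.mul_left r), mem_filter,
      mem_range, mem_singleton, Nat.dvd_one, hp.ne_one, or_false]
    exact ⟨fun hr ↦ Nat.eq_zero_of_dvd_of_lt hr.2 hr.1, fun hr ↦ hr ▸ ⟨hp.pos, dvd_zero p⟩⟩
  rw [rootCount_apply, this, card_singleton]

theorem rootCount_pairPoly_of_not_dvd (hp : p.Prime) (hph : ¬p ∣ h) :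
    rootCount (pairPoly h) p = 2 := by
  have := Fact.mk hp
  have hh : (h : ZMod p) ≠ 0 := mt (ZMod.natCast_eq_zero_iff h p).1 hph
  set u := (-(h : ZMod p)⁻¹).val with hu
  have hroot : ∀ r < p, p ∣ r * h + 1 ↔ r = u := by
    intro r hr
    rw [← ZMod.natCast_eq_zero_iff, Nat.cast_add, Nat.cast_mul, Nat.cast_one,
      add_eq_zero_iff_eq_neg, ← eq_div_iff hh, neg_div, one_div]
    exact ⟨fun h ↦ by rw [hu, ← h, ZMod.val_natCast_of_lt hr],
      fun h ↦ by rw [h, hu, ZMod.natCast_zmod_val]⟩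
  have hu₀ : u ≠ 0 := by simpa [hu, ZMod.val_eq_zero] using hh
  have : {r ∈ range p | p ∣ absEval (pairPoly h) r} = {0, u} := by
    ext r
    simp only [absEval_pairPoly, hp.dvd_mul, mem_filter, mem_range, mem_insert, mem_singleton]
    constructor
    · rintro ⟨hr, h | h⟩
      · exact .inl (Nat.eq_zero_of_dvd_of_lt h hr)
      · exact .inr ((hroot r hr).1 h)
    · rintro (rfl | rfl)
      · exact ⟨hp.pos, .inl (dvd_zero p)⟩
      · exact ⟨ZMod.val_lt _, .inr ((hroot u (ZMod.val_lt _)).2 rfl)⟩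
  rw [rootCount_apply, this, card_pair hu₀.symm]

theorem rootCount_pairPoly_pos (hp : p.Prime) : 0 < rootCount (pairPoly h) p := by
  by_cases hph : p ∣ h
  · simp [rootCount_pairPoly_of_dvd hp hph]
  · simp [rootCount_pairPoly_of_not_dvd hp hph]

theorem rootCount_pairPoly_lt (hh : 2 ∣ h) (hp : p.Prime) : rootCount (pairPoly h) p < p := by
  by_cases hph : p ∣ h
  · rw [rootCount_pairPoly_of_dvd hp hph]
    exact hp.one_lt
  · rw [rootCount_pairPoly_of_not_dvd hp hph]
    exact hp.two_le.lt_of_ne (by rintro rfl; exact hph hh)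

theorem rootCount_pairPoly_le_sigma_zero {d : ℕ} (hd : Squarefree d) :
    rootCount (pairPoly h) d ≤ sigma 0 d := by
  rw [rootCount_eq_prod hd, sigma_zero_apply, Nat.card_divisors hd.ne_zero]
  refine prod_le_prod' fun p hp ↦ ?_
  have hpp := Nat.prime_of_mem_primeFactors hp
  rw [Nat.factorization_eq_one_of_squarefree hd hpp (Nat.dvd_of_mem_primeFactors hp)]
  by_cases hph : p ∣ h
  · exact (rootCount_pairPoly_of_dvd hpp hph).trans_le one_le_two
  · exact (rootCount_pairPoly_of_not_dvd hpp hph).le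

theorem sum_Ioc_sigma_zero_le (z : ℕ) :
    (∑ d ∈ Ioc 0 z, sigma 0 d : ℕ) ≤ (z : ℝ) * (1 + log z) := by
  rw [sum_Ioc_sigma0_eq_sum_div, Nat.cast_sum]
  calc ∑ n ∈ Ioc 0 z, ((z / n : ℕ) : ℝ) ≤ ∑ n ∈ Ioc 0 z, (z : ℝ) * (n : ℝ)⁻¹ :=
        sum_le_sum fun n _ ↦ Nat.cast_div_le
    _ = z * (harmonic z : ℝ) := by
        rw [← mul_sum, harmonic_eq_sum_Icc]
        push_cast
        rfl
    _ ≤ z * (1 + log z) := by gcongr; exact harmonic_le_one_add_log z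

variable (M z) in
/-- The sieve by the primes up to `z` of the values of `n(nh + 1)` at `1, …, M`. -/
noncomputable def pairSieve (hh : 2 ∣ h) : BoundingSieve :=
  polynomialSieve (pairPoly h) M (primorial z) (squarefree_primorial z) fun _ hp _ ↦
    ⟨rootCount_pairPoly_pos hp, rootCount_pairPoly_lt hh hp⟩

theorem pairSieve_nu_of_dvd (hh : 2 ∣ h) (hp : p.Prime) (hph : p ∣ h) :
    (pairSieve M z hh).nu p = 1 / p := by
  rw [pairSieve, polynomialSieve_nu, rootCount_pairPoly_of_dvd hp hph, Nat.cast_one]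

theorem pairSieve_nu_of_not_dvd (hh : 2 ∣ h) (hp : p.Prime) (hph : ¬p ∣ h) :
    (pairSieve M z hh).nu p = 2 / p := by
  rw [pairSieve, polynomialSieve_nu, rootCount_pairPoly_of_not_dvd hp hph, Nat.cast_two]

theorem prodPrimes_pairSieve (hh : 2 ∣ h) : (pairSieve M z hh).prodPrimes = primorial z := by
  rw [pairSieve, polynomialSieve]

theorem dvd_prodPrimes_pairSieve (hh : 2 ∣ h) (hp : p.Prime) :
    p ∣ (pairSieve M z hh).prodPrimes ↔ p ≤ z := by
  rw [prodPrimes_pairSieve, hp.dvd_primorial_iff]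

theorem sum_rootCount_pairPoly_le (hh : 2 ∣ h) :
    ∑ d ∈ selbergSupport (pairSieve M z hh) z, (rootCount (pairPoly h) d : ℝ) ≤
      z * (1 + log z) := by
  refine le_trans ?_ (sum_Ioc_sigma_zero_le z)
  rw [← Nat.cast_sum, Nat.cast_le]
  have hdvd {d : ℕ} (hd : d ∈ selbergSupport (pairSieve M z hh) z) :=
    mem_selbergSupport.1 hd
  calc ∑ d ∈ selbergSupport (pairSieve M z hh) z, rootCount (pairPoly h) d
      ≤ ∑ d ∈ selbergSupport (pairSieve M z hh) z, sigma 0 d := sum_le_sum fun d hd ↦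
        rootCount_pairPoly_le_sigma_zero (squarefree_of_dvd_prodPrimes (hdvd hd).1)
    _ ≤ ∑ d ∈ Ioc 0 z, sigma 0 d := sum_le_sum_of_subset fun d hd ↦ mem_Ioc.2
        ⟨Nat.pos_of_ne_zero (ne_zero_of_dvd_ne_zero prodPrimes_ne_zero (hdvd hd).1), (hdvd hd).2⟩

variable (h M) in
/-- The primes `q ≤ M` for which `qh + 1` is prime too. -/
def primePairs : Finset ℕ := {q ∈ Ioc 0 M | q.Prime ∧ (q * h + 1).Prime}

theorem coprime_primorial_of_lt {q : ℕ} (hq : q.Prime) (hz : z < q) : (primorial z).Coprime q :=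
  ((Nat.Prime.coprime_iff_not_dvd hq).2 fun h ↦ (hq.dvd_primorial_iff.1 h).not_gt hz).symm

theorem primePairs_subset (hh : 0 < h) :
    primePairs h M ⊆
      Ioc 0 z ∪ {n ∈ Ioc 0 M | (primorial z).Coprime (absEval (pairPoly h) n)} := by
  intro q hq
  obtain ⟨hqM, hq, hqh⟩ := mem_filter.1 hq
  rcases le_or_gt q z with hqz | hqz
  · exact mem_union_left _ (mem_Ioc.2 ⟨hq.pos, hqz⟩)
  · refine mem_union_right _ (mem_filter.2 ⟨hqM, ?_⟩)
    rw [absEval_pairPoly]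
    exact (coprime_primorial_of_lt hq hqz).mul_right
      (coprime_primorial_of_lt hqh (by nlinarith))

theorem card_primePairs_le (hh : 2 ∣ h) (h₀ : 0 < h) (hz : 1 ≤ z) :
    #(primePairs h M) ≤
      z + M / selbergSum (pairSieve M z hh) z + (z * (1 + log z)) ^ 2 := by
  have hcard : (#(primePairs h M) : ℝ) ≤
      z + #{n ∈ Ioc 0 M | (primorial z).Coprime (absEval (pairPoly h) n)} := by
    have := (card_le_card (primePairs_subset (M := M) (z := z) h₀)).trans (card_union_le _ _)
    rw [Nat.card_Ioc, Nat.sub_zero] at this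
    exact_mod_cast this
  have hsieve : (#{n ∈ Ioc 0 M | (primorial z).Coprime (absEval (pairPoly h) n)} : ℝ) ≤
      M / selbergSum (pairSieve M z hh) z +
        (∑ d ∈ selbergSupport (pairSieve M z hh) z, (rootCount (pairPoly h) d : ℝ)) ^ 2 :=
    card_coprime_absEval_le hz
  have hroots := pow_le_pow_left₀ (by positivity) (sum_rootCount_pairPoly_le (M := M) (z := z) hh) 2
  linarith

theorem pairSieve_nu_le_nu_two (hh : 2 ∣ h) (hp : p.Prime) :
    (pairSieve M z hh).nu p ≤ (pairSieve M z dvd_rfl).nu p := by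
  by_cases hph : p ∣ h
  · rw [pairSieve_nu_of_dvd hh hp hph]
    by_cases hp2 : p ∣ 2
    · rw [pairSieve_nu_of_dvd _ hp hp2]
    · rw [pairSieve_nu_of_not_dvd _ hp hp2]
      gcongr
      exact one_le_two
  · rw [pairSieve_nu_of_not_dvd hh hp hph,
      pairSieve_nu_of_not_dvd _ hp fun hp2 ↦ hph (hp2.trans hh)]

theorem one_sub_pairSieve_nu_div (hh : 2 ∣ h) (hp : p.Prime) (hpz : p ≤ z) :
    (1 - (pairSieve M z hh).nu p) / (1 - (pairSieve M z dvd_rfl).nu p) =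
      if p ∣ h ∧ 2 < p then 1 + 1 / ((p : ℝ) - 2) else 1 := by
  have hne : 1 - (pairSieve M z dvd_rfl).nu p ≠ 0 := (sub_pos.2 <|
    nu_lt_one_of_prime _ p hp ((dvd_prodPrimes_pairSieve dvd_rfl hp).2 hpz)).ne'
  split_ifs with h'
  · have hp2 : ¬p ∣ 2 := fun hp2 ↦ (Nat.le_of_dvd two_pos hp2).not_gt h'.2
    have : (p : ℝ) - 2 ≠ 0 := (sub_pos.2 (mod_cast h'.2 : (2 : ℝ) < p)).ne'
    have : (p : ℝ) ≠ 0 := mod_cast hp.ne_zero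
    rw [pairSieve_nu_of_dvd hh hp h'.1, pairSieve_nu_of_not_dvd _ hp hp2]
    field_simp
    ring
  · rw [div_eq_one_iff_eq hne, sub_right_inj]
    by_cases hph : p ∣ h
    · have hp2 : p = 2 := by_contra fun hp2 ↦ h' ⟨hph, hp.two_le.lt_of_ne' hp2⟩
      rw [pairSieve_nu_of_dvd hh hp hph, pairSieve_nu_of_dvd _ hp hp2.dvd]
    · rw [pairSieve_nu_of_not_dvd hh hp hph,
        pairSieve_nu_of_not_dvd _ hp fun hp2 ↦ hph (hp2.trans hh)]

/-- The factor `∏_{p ∣ h, p > 2} (1 + 1/(p - 2))` of the singular series of the pair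
`(q, qh + 1)` that depends on `h`. -/
noncomputable def singularFactor (h : ℕ) : ℝ :=
  ∏ p ∈ h.primeFactors with 2 < p, (1 + 1 / ((p : ℝ) - 2))

theorem one_le_one_add_one_div_sub_two (hp : 2 < p) : 1 ≤ 1 + 1 / ((p : ℝ) - 2) := by
  have : (2 : ℝ) < p := mod_cast hp
  exact le_add_of_nonneg_right (one_div_nonneg.2 (by linarith))

theorem one_le_singularFactor (h : ℕ) : 1 ≤ singularFactor h :=
  one_le_prod fun _ hp ↦ one_le_one_add_one_div_sub_two (mem_filter.1 hp).2

theorem selbergSum_pairSieve_two_le (hh : 2 ∣ h) (h₀ : h ≠ 0) (hz : 1 ≤ z) :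
    selbergSum (pairSieve M z dvd_rfl) z ≤ selbergSum (pairSieve M z hh) z * singularFactor h := by
  have hG := (selbergSum_pos (s := pairSieve M z hh) hz).le
  have hP : (pairSieve M z hh).prodPrimes = (pairSieve M z dvd_rfl).prodPrimes := by
    rw [prodPrimes_pairSieve, prodPrimes_pairSieve]
  refine (selbergSum_le_mul_prod hP fun p hp _ ↦ pairSieve_nu_le_nu_two hh hp).trans
    (mul_le_mul_of_nonneg_left ?_ hG)
  have hfactor : ∀ p ∈ (pairSieve M z hh).prodPrimes.primeFactors,
      (1 - (pairSieve M z hh).nu p) / (1 - (pairSieve M z dvd_rfl).nu p) =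
        if p ∣ h ∧ 2 < p then 1 + 1 / ((p : ℝ) - 2) else 1 := fun p hp ↦
    have hpp := Nat.prime_of_mem_primeFactors hp
    one_sub_pairSieve_nu_div hh hpp
      ((dvd_prodPrimes_pairSieve hh hpp).1 (Nat.dvd_of_mem_primeFactors hp))
  rw [singularFactor, prod_congr rfl hfactor, ← prod_filter]
  refine prod_le_prod_of_subset_of_one_le (fun p hp ↦ ?_)
    (fun p hp ↦ zero_le_one.trans (one_le_one_add_one_div_sub_two (mem_filter.1 hp).2.2))
    (fun p hp _ ↦ one_le_one_add_one_div_sub_two (mem_filter.1 hp).2)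
  obtain ⟨hp, hph, hp2⟩ := mem_filter.1 hp
  exact mem_filter.2 ⟨Nat.mem_primeFactors.2 ⟨Nat.prime_of_mem_primeFactors hp, hph, h₀⟩, hp2⟩

end PrimePairs

section LogSum

/-- The logarithmically weighted summatory function `∑_{n ≤ y} f(n)/n`. -/
noncomputable def logSum (f : ArithmeticFunction ℝ) (y : ℝ) : ℝ := ∑ n ∈ Ioc 0 ⌊y⌋₊, f n / n

/-- The indicator of the odd numbers. -/
def oddIndicator : ArithmeticFunction ℝ := ⟨fun n ↦ if Odd n then 1 else 0, by simp⟩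

theorem oddIndicator_apply (n : ℕ) : oddIndicator n = if Odd n then 1 else 0 := rfl

theorem oddIndicator_isMultiplicative : oddIndicator.IsMultiplicative :=
  ⟨by simp [oddIndicator_apply], fun {m n} _ ↦ by
    simp only [oddIndicator_apply, Nat.odd_mul, ite_and, ite_mul, one_mul, zero_mul]⟩

theorem pdiv_id_mul (f g : ArithmeticFunction ℝ) :
    (f * g).pdiv (ArithmeticFunction.id : ArithmeticFunction ℝ) =
      f.pdiv (ArithmeticFunction.id : ArithmeticFunction ℝ) *
        g.pdiv (ArithmeticFunction.id : ArithmeticFunction ℝ) := by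
  ext n
  simp only [pdiv_apply, mul_apply, natCoe_apply, id_apply, sum_div]
  refine sum_congr rfl fun x hx ↦ ?_
  rw [← (Nat.mem_divisorsAntidiagonal.1 hx).1, Nat.cast_mul, mul_div_mul_comm]

theorem logSum_mul (f g : ArithmeticFunction ℝ) (y : ℝ) :
    logSum (f * g) y = ∑ m ∈ Ioc 0 ⌊y⌋₊, f m / m * logSum g (y / m) := by
  have := sum_Ioc_mul_eq_sum_sum (f.pdiv (ArithmeticFunction.id : ArithmeticFunction ℝ))
    (g.pdiv (ArithmeticFunction.id : ArithmeticFunction ℝ)) ⌊y⌋₊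
  simpa only [← pdiv_id_mul, pdiv_apply, natCoe_apply, id_apply, logSum, Nat.floor_div_natCast]
    using this

theorem log_le_logSum_zeta {y : ℝ} (hy : 0 ≤ y) : log y ≤ logSum zeta y := by
  refine (log_le_harmonic_floor y hy).trans_eq ?_
  rw [harmonic_eq_sum_Icc, logSum, Rat.cast_sum]
  refine sum_congr rfl fun n hn ↦ ?_
  have : n ≠ 0 := Nat.one_le_iff_ne_zero.1 (mem_Icc.1 hn).1
  simp [zeta_apply, this]

theorem sq_posLog_div_sub_sq_posLog_div_le {Y r : ℝ} (hY : 0 ≤ Y) (hr : 0 < r) :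
    posLog (Y / r) ^ 2 - posLog (Y / (r + 2)) ^ 2 ≤ 4 * (posLog (Y / r) / r) := by
  have hsplit : posLog (Y / r) ≤ posLog (Y / (r + 2)) + 2 / r :=
    calc posLog (Y / r) = posLog (Y / (r + 2) * (1 + 2 / r)) := by
          congr 1
          field_simp
      _ ≤ posLog (Y / (r + 2)) + posLog (1 + 2 / r) := posLog_mul
      _ ≤ posLog (Y / (r + 2)) + 2 / r := by
          have h1 : 1 ≤ 1 + 2 / r := le_add_of_nonneg_right (by positivity)
          rw [posLog_eq_log (h1.trans (le_abs_self _))]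
          linarith [log_le_sub_one_of_pos (zero_lt_one.trans_le h1)]
  have hmono : posLog (Y / (r + 2)) ≤ posLog (Y / r) :=
    posLog_le_posLog (by positivity) (by gcongr; linarith)
  have hnn : 0 ≤ posLog (Y / (r + 2)) := posLog_nonneg
  calc posLog (Y / r) ^ 2 - posLog (Y / (r + 2)) ^ 2
      = (posLog (Y / r) - posLog (Y / (r + 2))) * (posLog (Y / r) + posLog (Y / (r + 2))) := by
        ring
    _ ≤ 2 / r * (posLog (Y / r) + posLog (Y / r)) := by
        gcongr
        · linarith
        · linarith
    _ = 4 * (posLog (Y / r) / r) := by ring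

theorem sq_log_div_four_le_sum_odd {Y : ℝ} (hY : 1 ≤ Y) :
    log Y ^ 2 / 4 ≤ ∑ r ∈ Ioc 0 ⌊Y⌋₊ with Odd r, log (Y / r) / r := by
  set N := (⌊Y⌋₊ + 1) / 2
  have hreindex : ∑ r ∈ Ioc 0 ⌊Y⌋₊ with Odd r, log (Y / r) / r =
      ∑ i ∈ range N, posLog (Y / (2 * i + 1)) / (2 * i + 1) := by
    refine sum_bij' (fun r _ ↦ r / 2) (fun i _ ↦ 2 * i + 1) ?_ ?_ ?_ ?_ ?_
    · intro r hr
      simp only [mem_filter, mem_Ioc, mem_range, Nat.odd_iff] at hr ⊢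
      omega
    · intro i hi
      simp only [mem_filter, mem_Ioc, mem_range, odd_two_mul_add_one, and_true] at hi ⊢
      omega
    · exact fun r hr ↦ Nat.two_mul_div_two_add_one_of_odd (mem_filter.1 hr).2
    · intro i _
      omega
    · intro r hr
      obtain ⟨hr, hodd⟩ := mem_filter.1 hr
      have hr₀ : (0 : ℝ) < r := mod_cast (mem_Ioc.1 hr).1
      have hrY : (r : ℝ) ≤ Y := (Nat.le_floor_iff (by linarith)).1 (mem_Ioc.1 hr).2
      have hcast : 2 * ((r / 2 : ℕ) : ℝ) + 1 = r := mod_cast Nat.two_mul_div_two_add_one_of_odd hodd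
      rw [hcast, posLog_eq_log (((one_le_div hr₀).2 hrY).trans (le_abs_self _))]
  have hlast : posLog (Y / (2 * N + 1)) = 0 := by
    have hlt : Y < 2 * N + 1 :=
      (Nat.lt_floor_add_one Y).trans_le (by exact_mod_cast (by omega : ⌊Y⌋₊ + 1 ≤ 2 * N + 1))
    rw [posLog_eq_zero_iff, abs_of_nonneg (by positivity), div_le_one (by positivity)]
    exact hlt.le
  have htelescope := sum_range_sub' (fun i : ℕ ↦ posLog (Y / (2 * i + 1)) ^ 2) N
  rw [hlast, Nat.cast_zero, mul_zero, zero_add, div_one,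
    posLog_eq_log (hY.trans (le_abs_self _))] at htelescope
  rw [hreindex, div_le_iff₀ four_pos, mul_comm, mul_sum]
  calc log Y ^ 2 = ∑ i ∈ range N, (posLog (Y / (2 * i + 1)) ^ 2 -
        posLog (Y / (2 * ((i + 1 : ℕ) : ℝ) + 1)) ^ 2) := by rw [htelescope]; ring
    _ ≤ _ := sum_le_sum fun i _ ↦ by
        rw [(by push_cast; ring : 2 * ((i + 1 : ℕ) : ℝ) + 1 = 2 * i + 1 + 2)]
        exact sq_posLog_div_sub_sq_posLog_div_le (by linarith) (by positivity)

theorem sq_log_div_four_le_logSum_oddIndicator_mul_zeta {Y : ℝ} (hY : 1 ≤ Y) :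
    log Y ^ 2 / 4 ≤ logSum (oddIndicator * zeta) Y := by
  rw [logSum_mul]
  refine (sq_log_div_four_le_sum_odd hY).trans ?_
  rw [sum_filter]
  refine sum_le_sum fun r _ ↦ ?_
  rw [oddIndicator_apply]
  split_ifs
  · rw [div_mul_eq_mul_div, one_mul]
    gcongr
    exact log_le_logSum_zeta (by positivity)
  · simp

theorem le_logSum_mul {b g : ArithmeticFunction ℝ} {B D y : ℝ} (hb : ∀ n, 0 ≤ b n)
    (hB : HasSum (fun n : ℕ ↦ b n / n) B) (hD : HasSum (fun n : ℕ ↦ b n / n * log n) D)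
    (hg : ∀ Y, 1 ≤ Y → log Y ^ 2 / 4 ≤ logSum g Y) (hy : 1 ≤ y) :
    (B * log y ^ 2 - 2 * D * log y) / 4 ≤ logSum (b * g) y := by
  have hy₀ : 0 < y := by linarith
  have hlog : 0 ≤ log y := log_nonneg hy
  have hbn (n : ℕ) : 0 ≤ b n / n := div_nonneg (hb n) n.cast_nonneg
  have hsum : HasSum (fun n : ℕ ↦ b n / n * log n * (2 * log y) - b n / n * log y ^ 2)
      (D * (2 * log y) - B * log y ^ 2) :=
    (hD.mul_right _).sub (hB.mul_right _)
  have htail : ∀ n ∉ Ioc 0 ⌊y⌋₊, 0 ≤ b n / n * log n * (2 * log y) - b n / n * log y ^ 2 := by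
    intro n hn
    rcases n.eq_zero_or_pos with rfl | hn₀
    · simp
    have hyn : y ≤ n := ((Nat.floor_lt hy₀.le).1 (by simpa [hn₀] using hn)).le
    have := log_le_log hy₀ hyn
    have := mul_nonneg (hbn n) (mul_nonneg hlog (by linarith : 0 ≤ 2 * log n - log y))
    linarith
  have hhead := sum_le_hasSum _ htail hsum
  rw [logSum_mul, div_le_iff₀ four_pos, sum_mul]
  calc B * log y ^ 2 - 2 * D * log y
      ≤ ∑ n ∈ Ioc 0 ⌊y⌋₊, b n / n * (log y ^ 2 - 2 * log n * log y) := by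
        rw [← neg_le_neg_iff, ← sum_neg_distrib]
        refine (sum_congr rfl fun n _ ↦ ?_).trans_le (hhead.trans_eq ?_) <;> ring
    _ ≤ _ := sum_le_sum fun n hn ↦ ?_
  have hn₀ : (0 : ℝ) < n := mod_cast (mem_Ioc.1 hn).1
  have hny : (n : ℝ) ≤ y := (Nat.le_floor_iff hy₀.le).1 (mem_Ioc.1 hn).2
  have hgn := hg (y / n) ((one_le_div hn₀).2 hny)
  rw [log_div hy₀.ne' hn₀.ne'] at hgn
  rw [mul_assoc (b n / n)]
  exact mul_le_mul_of_nonneg_left (by linarith [sq_nonneg (log n)]) (hbn n)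

end LogSum

section PrimePowers

/-- The multiplicative function taking the value `g p k` at each prime power `p ^ k`; this requires
`g p 0 = 1`. -/
noncomputable def ofPrimePowers (g : ℕ → ℕ → ℝ) : ArithmeticFunction ℝ :=
  ⟨fun n ↦ if n = 0 then 0 else n.factorization.prod g, if_pos rfl⟩

variable {g : ℕ → ℕ → ℝ}

theorem ofPrimePowers_apply {n : ℕ} (hn : n ≠ 0) : ofPrimePowers g n = n.factorization.prod g :=
  if_neg hn

theorem ofPrimePowers_nonneg (hg : ∀ p k, 0 ≤ g p k) (n : ℕ) : 0 ≤ ofPrimePowers g n := by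
  rcases eq_or_ne n 0 with rfl | hn
  · simp
  · rw [ofPrimePowers_apply hn]
    exact prod_nonneg fun p _ ↦ hg p _

theorem ofPrimePowers_prime_pow (hg : ∀ p, g p 0 = 1) {p : ℕ} (hp : p.Prime) (k : ℕ) :
    ofPrimePowers g (p ^ k) = g p k := by
  rw [ofPrimePowers_apply (pow_ne_zero k hp.ne_zero), hp.factorization_pow,
    Finsupp.prod_single_index (hg p)]

theorem ofPrimePowers_isMultiplicative : (ofPrimePowers g).IsMultiplicative :=
  IsMultiplicative.iff_ne_zero.2 ⟨by simp [ofPrimePowers_apply one_ne_zero],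
    fun {m n} hm hn hmn ↦ by
      rw [ofPrimePowers_apply (mul_ne_zero hm hn), ofPrimePowers_apply hm, ofPrimePowers_apply hn,
        Nat.factorization_mul hm hn,
        Finsupp.prod_add_index_of_disjoint (by simpa using hmn.disjoint_primeFactors)]⟩

theorem mul_apply_prime_pow (f g : ArithmeticFunction ℝ) {p : ℕ} (hp : p.Prime) (k : ℕ) :
    (f * g) (p ^ k) = ∑ j ∈ range (k + 1), f (p ^ j) * g (p ^ (k - j)) := by
  rw [mul_apply, Nat.sum_divisorsAntidiagonal (fun a b ↦ f a * g b), Nat.sum_divisors_prime_pow hp]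
  exact sum_congr rfl fun j hj ↦ by rw [Nat.pow_div (mem_range_succ_iff.1 hj) hp.pos]

theorem summable_of_tsum_prime_pow_le {f : ℕ → ℝ} {c : ℕ → ℝ} (hf₀ : f 0 = 0) (hf₁ : f 1 = 1)
    (hmul : ∀ {m n : ℕ}, m.Coprime n → f (m * n) = f m * f n) (hf : ∀ n, 0 ≤ f n)
    (hsum : ∀ {p : ℕ}, p.Prime → Summable fun k ↦ f (p ^ k)) (hc₀ : ∀ n, 0 ≤ c n)
    (hc : Summable c) (hle : ∀ p : ℕ, p.Prime → ∑' k, f (p ^ k) ≤ 1 + c p) : Summable f := by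
  refine summable_of_sum_le (c := exp (∑' n, c n)) hf fun s ↦ ?_
  obtain ⟨N, hN⟩ := s.exists_nat_subset_range
  have hsmooth := hasSum_subtype_iff_indicator.1
    (EulerProduct.summable_and_hasSum_smoothNumbers_prod_primesBelow_tsum hf₁ hmul
      (fun hp ↦ (hsum hp).norm) N).2
  calc ∑ n ∈ s, f n ≤ ∑ n ∈ s, (N.smoothNumbers).indicator f n := by
        refine sum_le_sum fun n hn ↦ ?_
        rcases n.eq_zero_or_pos with rfl | hn₀
        · rw [hf₀]
          exact Set.indicator_nonneg (fun n _ ↦ hf n) 0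
        · rw [Set.indicator_of_mem (Nat.mem_smoothNumbers_of_lt hn₀ (mem_range.1 (hN hn)))]
    _ ≤ ∏ p ∈ N.primesBelow, ∑' k, f (p ^ k) :=
        sum_le_hasSum s (fun n _ ↦ Set.indicator_nonneg (fun n _ ↦ hf n) n) hsmooth
    _ ≤ ∏ p ∈ N.primesBelow, exp (c p) := by
        refine prod_le_prod (fun p _ ↦ tsum_nonneg fun k ↦ hf _) fun p hp ↦ ?_
        refine (hle p (Nat.prime_of_mem_primesBelow hp)).trans ?_
        rw [add_comm]
        exact add_one_le_exp _
    _ = exp (∑ p ∈ N.primesBelow, c p) := (exp_sum _ _).symm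
    _ ≤ exp (∑' n, c n) := exp_le_exp.2 (hc.sum_le_tsum _ fun n _ ↦ hc₀ n)

end PrimePowers

section TwinKernel

/-- The completely multiplicative function with value `1/2` at `2` and `2/p` at odd primes `p`. -/
noncomputable def twinDensity : ℕ →* ℝ where
  toFun n := 2 ^ Ω n / (2 ^ n.factorization 2 * n)
  map_one' := by simp
  map_mul' m n := by
    rcases eq_or_ne m 0 with rfl | hm
    · simp
    rcases eq_or_ne n 0 with rfl | hn
    · simp
    rw [cardFactors_mul hm hn, Nat.factorization_mul hm hn, Finsupp.add_apply, Nat.cast_mul,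
      pow_add, pow_add, div_mul_div_comm]
    ring

theorem twinDensity_apply (n : ℕ) :
    twinDensity n = 2 ^ Ω n / (2 ^ n.factorization 2 * n) := rfl

theorem twinDensity_nonneg (n : ℕ) : 0 ≤ twinDensity n := by
  rw [twinDensity_apply]
  positivity

theorem twinDensity_two : twinDensity 2 = 1 / 2 := by
  rw [twinDensity_apply, cardFactors_apply_prime Nat.prime_two, Nat.prime_two.factorization_self]
  norm_num

theorem twinDensity_of_ne_two {p : ℕ} (hp : p.Prime) (hp₂ : p ≠ 2) : twinDensity p = 2 / p := by
  rw [twinDensity_apply, cardFactors_apply_prime hp, hp.factorization,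
    Finsupp.single_eq_of_ne (by exact hp₂.symm)]
  norm_num

/-- The function `n ↦ n · twinDensity n`, with value `1` at powers of `2` and `2 ^ k` at `p ^ k`
for odd primes `p`. -/
noncomputable def twinFunction : ArithmeticFunction ℝ := ⟨fun n ↦ twinDensity n * n, by simp⟩

theorem twinFunction_apply (n : ℕ) : twinFunction n = twinDensity n * n := rfl

theorem twinFunction_isMultiplicative : twinFunction.IsMultiplicative :=
  ⟨by simp [twinFunction_apply], fun {m n} _ ↦ by
    simp only [twinFunction_apply, map_mul, Nat.cast_mul]
    ring⟩

theorem twinFunction_two_pow (k : ℕ) : twinFunction (2 ^ k) = 1 := by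
  rw [twinFunction_apply, map_pow, twinDensity_two, Nat.cast_pow, ← mul_pow]
  norm_num

theorem twinFunction_prime_pow {p : ℕ} (hp : p.Prime) (hp₂ : p ≠ 2) (k : ℕ) :
    twinFunction (p ^ k) = 2 ^ k := by
  rw [twinFunction_apply, map_pow, twinDensity_of_ne_two hp hp₂, Nat.cast_pow, ← mul_pow,
    div_mul_cancel₀ _ (mod_cast hp.ne_zero)]

/-- The value at `p ^ k` of `twinKernel`. -/
noncomputable def twinFactor (p k : ℕ) : ℝ :=
  if k = 0 then 1 else if p = 2 ∨ k = 1 then 0 else 2 ^ (k - 2)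

/-- The multiplicative function `b` for which `twinFunction = b * oddIndicator * ζ`; as it vanishes
at primes, its Dirichlet series converges to the left of `1`. -/
noncomputable def twinKernel : ArithmeticFunction ℝ := ofPrimePowers twinFactor

theorem twinFactor_zero (p : ℕ) : twinFactor p 0 = 1 := if_pos rfl

theorem twinFactor_one (p : ℕ) : twinFactor p 1 = 0 := by simp [twinFactor]

theorem twinFactor_two_succ (k : ℕ) : twinFactor 2 (k + 1) = 0 := by simp [twinFactor]

theorem twinFactor_add_two {p : ℕ} (hp₂ : p ≠ 2) (k : ℕ) : twinFactor p (k + 2) = 2 ^ k := by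
  simp [twinFactor, hp₂]

theorem sum_range_twinFactor {p : ℕ} (hp₂ : p ≠ 2) (k : ℕ) :
    ∑ j ∈ range (k + 2), twinFactor p j = 2 ^ k := by
  induction k with
  | zero => simp [sum_range_succ, twinFactor]
  | succ k ih => rw [sum_range_succ, ih, twinFactor_add_two hp₂, pow_succ, mul_two]

theorem twinKernel_nonneg (n : ℕ) : 0 ≤ twinKernel n :=
  ofPrimePowers_nonneg (fun p k ↦ by unfold twinFactor; positivity) n

theorem twinKernel_isMultiplicative : twinKernel.IsMultiplicative := ofPrimePowers_isMultiplicative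

theorem twinKernel_prime_pow {p : ℕ} (hp : p.Prime) (k : ℕ) : twinKernel (p ^ k) = twinFactor p k :=
  ofPrimePowers_prime_pow twinFactor_zero hp k

theorem twinKernel_mul_oddIndicator_two_pow_succ (k : ℕ) :
    (twinKernel * oddIndicator) (2 ^ (k + 1)) = 0 := by
  rw [mul_apply_prime_pow _ _ Nat.prime_two]
  refine sum_eq_zero fun j _ ↦ ?_
  rw [twinKernel_prime_pow Nat.prime_two]
  rcases j with - | j
  · rw [oddIndicator_apply, if_neg (by simp [Nat.even_pow]), mul_zero]
  · rw [twinFactor_two_succ, zero_mul]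

theorem twinKernel_mul_oddIndicator_prime_pow_succ {p : ℕ} (hp : p.Prime) (hp₂ : p ≠ 2) (k : ℕ) :
    (twinKernel * oddIndicator) (p ^ (k + 1)) = 2 ^ k := by
  rw [mul_apply_prime_pow _ _ hp, ← sum_range_twinFactor hp₂]
  refine sum_congr rfl fun j _ ↦ ?_
  rw [twinKernel_prime_pow hp, oddIndicator_apply, if_pos (hp.odd_of_ne_two hp₂).pow, mul_one]

theorem twinKernel_mul_oddIndicator_mul_zeta :
    twinKernel * oddIndicator * (zeta : ArithmeticFunction ℝ) = twinFunction := by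
  have hmul := twinKernel_isMultiplicative.mul oddIndicator_isMultiplicative
  rw [IsMultiplicative.eq_iff_eq_on_prime_powers _ (hmul.mul isMultiplicative_zeta.natCast) _
    twinFunction_isMultiplicative]
  intro p k hp
  rw [coe_mul_zeta_apply, Nat.sum_divisors_prime_pow hp, sum_range_succ', pow_zero, hmul.map_one]
  rcases eq_or_ne p 2 with rfl | hp₂
  · simp only [twinKernel_mul_oddIndicator_two_pow_succ, sum_const_zero, zero_add,
      twinFunction_two_pow]
  · simp only [twinKernel_mul_oddIndicator_prime_pow_succ hp hp₂, twinFunction_prime_pow hp hp₂]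
    linarith [mul_geom_sum (2 : ℝ) k]

theorem hasSum_twinFactor_two (u : ℝ) : HasSum (fun k ↦ twinFactor 2 k * u ^ k) 1 := by
  convert hasSum_single (f := fun k ↦ twinFactor 2 k * u ^ k) 0 fun k hk ↦ ?_ using 1
  · rw [twinFactor_zero, pow_zero, mul_one]
  · obtain ⟨k, rfl⟩ := Nat.exists_eq_succ_of_ne_zero hk
    rw [twinFactor_two_succ, zero_mul]

theorem hasSum_twinFactor {p : ℕ} (hp₂ : p ≠ 2) {u : ℝ} (hu₀ : 0 ≤ u) (hu : u < 1 / 2) :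
    HasSum (fun k ↦ twinFactor p k * u ^ k) (1 + u ^ 2 / (1 - 2 * u)) := by
  have hshift : (fun k ↦ twinFactor p (k + 2) * u ^ (k + 2)) = fun k ↦ u ^ 2 * (2 * u) ^ k := by
    ext k
    rw [twinFactor_add_two hp₂, mul_pow, pow_add]
    ring
  have hgeom : HasSum (fun k ↦ twinFactor p (k + 2) * u ^ (k + 2)) (u ^ 2 / (1 - 2 * u)) := by
    rw [hshift, div_eq_mul_inv]
    exact (hasSum_geometric_of_lt_one (by linarith) (by linarith)).mul_left _
  simpa [sum_range_succ, twinFactor_zero, twinFactor_one, add_comm] using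
    (hasSum_nat_add_iff (f := fun k ↦ twinFactor p k * u ^ k) 2).1 hgeom

/-- The summable majorant `b(n) n^{-3/4}` of `b(n)/n` and of `b(n) log n / n`; the exponent `3/4` is
large enough for `2 · 3^{-3/4} < 1`, so that the Euler factors at odd primes converge. -/
noncomputable def twinMajorant (n : ℕ) : ℝ := twinKernel n * (n : ℝ) ^ (-(3 / 4) : ℝ)

theorem twinMajorant_prime_pow {p : ℕ} (hp : p.Prime) (k : ℕ) :
    twinMajorant (p ^ k) = twinFactor p k * ((p : ℝ) ^ (-(3 / 4) : ℝ)) ^ k := by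
  rw [twinMajorant, twinKernel_prime_pow hp, Nat.cast_pow, ← rpow_pow_comm p.cast_nonneg]

theorem rpow_neg_three_div_four_le {p : ℝ} (hp : 3 ≤ p) : p ^ (-(3 / 4) : ℝ) ≤ 4 / 9 := by
  have hpow : (p ^ (-(3 / 4) : ℝ)) ^ 4 ≤ (4 / 9) ^ 4 :=
    calc (p ^ (-(3 / 4) : ℝ)) ^ 4 = (p ^ 3)⁻¹ := by
          rw [← rpow_natCast, ← rpow_mul (by linarith), ← rpow_natCast p 3,
            ← rpow_neg (by linarith)]
          norm_num
      _ ≤ (3 ^ 3)⁻¹ := by gcongr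
      _ ≤ (4 / 9) ^ 4 := by norm_num
  exact le_of_pow_le_pow_left₀ four_ne_zero (by norm_num) hpow

theorem summable_twinMajorant_prime_pow_and_tsum_le {p : ℕ} (hp : p.Prime) :
    (Summable fun k ↦ twinMajorant (p ^ k)) ∧
      ∑' k, twinMajorant (p ^ k) ≤ 1 + 9 * (p : ℝ) ^ (-(3 / 2) : ℝ) := by
  simp only [twinMajorant_prime_pow hp]
  rcases eq_or_ne p 2 with rfl | hp₂
  · have h := hasSum_twinFactor_two ((2 : ℕ) ^ (-(3 / 4) : ℝ))
    exact ⟨h.summable, h.tsum_eq.trans_le (le_add_of_nonneg_right (by positivity))⟩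
  · have hu := rpow_neg_three_div_four_le (p := p) (mod_cast hp.two_le.lt_of_ne' hp₂)
    have hsq : (p : ℝ) ^ (-(3 / 2) : ℝ) = ((p : ℝ) ^ (-(3 / 4) : ℝ)) ^ 2 := by
      rw [← rpow_natCast, ← rpow_mul p.cast_nonneg]
      norm_num
    rw [hsq]
    have hu₀ : 0 ≤ (p : ℝ) ^ (-(3 / 4) : ℝ) := by positivity
    set u := (p : ℝ) ^ (-(3 / 4) : ℝ)
    have h := hasSum_twinFactor hp₂ hu₀ (by linarith)
    refine ⟨h.summable, h.tsum_eq.trans_le (add_le_add_right ?_ 1)⟩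
    rw [div_le_iff₀ (by linarith)]
    nlinarith [sq_nonneg u]

theorem twinMajorant_nonneg (n : ℕ) : 0 ≤ twinMajorant n :=
  mul_nonneg (twinKernel_nonneg n) (by positivity)

theorem summable_twinMajorant : Summable twinMajorant := by
  refine summable_of_tsum_prime_pow_le (c := fun n ↦ 9 * (n : ℝ) ^ (-(3 / 2) : ℝ))
    (by simp [twinMajorant]) (by simp [twinMajorant, twinKernel_isMultiplicative.map_one])
    (fun {m n} hmn ↦ ?_) twinMajorant_nonneg
    (fun hp ↦ (summable_twinMajorant_prime_pow_and_tsum_le hp).1) (fun n ↦ by positivity)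
    ((summable_nat_rpow.2 (by norm_num)).mul_left 9)
    fun p hp ↦ (summable_twinMajorant_prime_pow_and_tsum_le hp).2
  rw [twinMajorant, twinKernel_isMultiplicative.map_mul_of_coprime hmn, Nat.cast_mul,
    mul_rpow m.cast_nonneg n.cast_nonneg, mul_mul_mul_comm, twinMajorant, twinMajorant]

theorem twinKernel_div_nonneg (n : ℕ) : 0 ≤ twinKernel n / n :=
  div_nonneg (twinKernel_nonneg n) n.cast_nonneg

theorem summable_twinKernel_div : Summable fun n : ℕ ↦ twinKernel n / n := by
  refine .of_nonneg_of_le twinKernel_div_nonneg (fun n ↦ ?_) summable_twinMajorant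
  rcases n.eq_zero_or_pos with rfl | hn
  · simp [twinMajorant]
  rw [div_eq_mul_inv, ← rpow_neg_one, twinMajorant]
  exact mul_le_mul_of_nonneg_left
    (rpow_le_rpow_of_exponent_le (mod_cast hn) (by norm_num)) (twinKernel_nonneg n)

theorem summable_twinKernel_div_mul_log : Summable fun n : ℕ ↦ twinKernel n / n * log n := by
  refine .of_nonneg_of_le
    (fun n ↦ mul_nonneg (twinKernel_div_nonneg n) (log_natCast_nonneg n)) (fun n ↦ ?_)
    (summable_twinMajorant.mul_left 4)
  rcases n.eq_zero_or_pos with rfl | hn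
  · simp [twinMajorant]
  have hn₀ : (0 : ℝ) < n := mod_cast hn
  calc twinKernel n / n * log n ≤ twinKernel n / n * ((n : ℝ) ^ (1 / 4 : ℝ) / (1 / 4)) :=
        mul_le_mul_of_nonneg_left (log_le_rpow_div hn₀.le (by norm_num)) (twinKernel_div_nonneg n)
    _ = 4 * (twinKernel n * ((n : ℝ) ^ (-1 : ℝ) * (n : ℝ) ^ (1 / 4 : ℝ))) := by
        rw [rpow_neg_one]
        ring
    _ = 4 * twinMajorant n := by
        rw [← rpow_add hn₀, twinMajorant]
        norm_num

theorem hasSum_twinKernel_div_prime_pow {p : ℕ} (hp : p.Prime) :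
    HasSum (fun k ↦ twinKernel (p ^ k) / ((p ^ k : ℕ) : ℝ))
      (if 2 < p then 1 - 1 / ((p : ℝ) - 1) ^ 2 else 1)⁻¹ := by
  simp only [twinKernel_prime_pow hp, Nat.cast_pow, div_eq_mul_inv (twinFactor _ _), ← inv_pow]
  rcases eq_or_ne p 2 with rfl | hp₂
  · simpa using hasSum_twinFactor_two 2⁻¹
  · have hp₃ : (3 : ℝ) ≤ p := mod_cast hp.two_le.lt_of_ne' hp₂
    have hu : (p : ℝ)⁻¹ < 1 / 2 := by
      rw [one_div]
      exact inv_strictAnti₀ two_pos (by linarith)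
    rw [if_pos (hp.two_le.lt_of_ne' hp₂)]
    convert hasSum_twinFactor hp₂ (by positivity) hu using 1
    have h₀ : (p : ℝ) ≠ 0 := by linarith
    have h₁ : (p : ℝ) - 1 ≠ 0 := by linarith
    have h₂ : (p : ℝ) - 2 ≠ 0 := by linarith
    have hsq : 1 - 1 / ((p : ℝ) - 1) ^ 2 = p * (p - 2) / (p - 1) ^ 2 := by
      field_simp
      ring
    rw [hsq, (by field_simp : 1 - 2 * (p : ℝ)⁻¹ = (p - 2) / p)]
    field_simp
    ring

theorem one_le_tsum_twinKernel_div : 1 ≤ ∑' n : ℕ, twinKernel n / n := by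
  simpa [twinKernel_isMultiplicative.map_one] using
    summable_twinKernel_div.le_tsum 1 fun n _ ↦ twinKernel_div_nonneg n

theorem tsum_twinKernel_div : ∑' n : ℕ, twinKernel n / n = twinConst⁻¹ := by
  have hprod := EulerProduct.eulerProduct_hasProd (f := fun n : ℕ ↦ twinKernel n / n)
    (by simp [twinKernel_isMultiplicative.map_one])
    (fun {m n} hmn ↦ by
      rw [twinKernel_isMultiplicative.map_mul_of_coprime hmn, Nat.cast_mul, mul_div_mul_comm])
    summable_twinKernel_div.norm (by simp)
  simp only [fun p : Nat.Primes ↦ (hasSum_twinKernel_div_prime_pow p.2).tsum_eq] at hprod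
  have hinv := hprod.inv₀ (by linarith [one_le_tsum_twinKernel_div])
  simp only [inv_inv] at hinv
  rw [twinConst, hinv.tprod_eq, inv_inv]

theorem twinConst_pos : 0 < twinConst := by
  rw [← inv_pos, ← tsum_twinKernel_div]
  linarith [one_le_tsum_twinKernel_div]

end TwinKernel

section SieveSum

/-- The constant `D` in the lower bound `log y (log y - D) / (4𝔖)` for the Selberg sum of the pair
`(q, 2q + 1)`. -/
noncomputable def twinShift : ℝ := 2 * twinConst * ∑' n : ℕ, twinKernel n / n * log n

theorem twinShift_nonneg : 0 ≤ twinShift :=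
  mul_nonneg (mul_nonneg two_pos.le twinConst_pos.le) <|
    tsum_nonneg fun n ↦ mul_nonneg (twinKernel_div_nonneg n) (log_natCast_nonneg n)

theorem log_mul_log_sub_le_logSum_twinFunction {y : ℝ} (hy : 1 ≤ y) :
    log y * (log y - twinShift) / (4 * twinConst) ≤ logSum twinFunction y := by
  rw [← twinKernel_mul_oddIndicator_mul_zeta, mul_assoc twinKernel]
  refine le_trans (le_of_eq ?_) <|
    le_logSum_mul twinKernel_nonneg (tsum_twinKernel_div ▸ summable_twinKernel_div.hasSum)
      summable_twinKernel_div_mul_log.hasSum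
      (fun _ ↦ sq_log_div_four_le_logSum_oddIndicator_mul_zeta) hy
  have := twinConst_pos
  rw [twinShift]
  field_simp

theorem logSum_twinFunction (y : ℝ) :
    logSum twinFunction y = ∑ n ∈ Ioc 0 ⌊y⌋₊, twinDensity n := by
  refine sum_congr rfl fun n hn ↦ ?_
  rw [twinFunction_apply, mul_div_cancel_right₀ _ (mod_cast (mem_Ioc.1 hn).1.ne')]

variable {M z : ℕ}

theorem twinDensity_eq_pairSieve_nu {p : ℕ} (hp : p.Prime) :
    twinDensity p = (pairSieve M z dvd_rfl).nu p := by
  rcases eq_or_ne p 2 with rfl | hp₂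
  · rw [twinDensity_two, pairSieve_nu_of_dvd _ hp dvd_rfl, Nat.cast_two]
  · rw [twinDensity_of_ne_two hp hp₂, pairSieve_nu_of_not_dvd _ hp
      fun h ↦ hp₂ ((Nat.prime_dvd_prime_iff_eq hp Nat.prime_two).1 h)]

theorem twinDensity_lt_one {p : ℕ} (hp : p.Prime) : twinDensity p < 1 := by
  rw [twinDensity_eq_pairSieve_nu (M := 0) (z := p) hp]
  exact BoundingSieve.nu_lt_one_of_prime _ p hp ((dvd_prodPrimes_pairSieve dvd_rfl hp).2 le_rfl)

theorem sum_twinDensity_le_selbergSum :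
    ∑ n ∈ Ioc 0 z, twinDensity n ≤ selbergSum (pairSieve M z dvd_rfl) z :=
  sum_Ioc_le_selbergSum twinDensity_nonneg (fun _ ↦ twinDensity_lt_one)
    (fun _ hp _ ↦ twinDensity_eq_pairSieve_nu hp)
    fun _ hp ↦ (dvd_prodPrimes_pairSieve dvd_rfl hp).2

theorem log_mul_log_sub_le_selbergSum {h : ℕ} (hh : 2 ∣ h) (h₀ : h ≠ 0) {y : ℝ} (hy : 1 ≤ y) :
    log y * (log y - twinShift) / (4 * twinConst) ≤
      selbergSum (pairSieve M ⌊y⌋₊ hh) ⌊y⌋₊ * singularFactor h :=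
  calc log y * (log y - twinShift) / (4 * twinConst) ≤ logSum twinFunction y :=
        log_mul_log_sub_le_logSum_twinFunction hy
    _ = ∑ n ∈ Ioc 0 ⌊y⌋₊, twinDensity n := logSum_twinFunction y
    _ ≤ selbergSum (pairSieve M ⌊y⌋₊ dvd_rfl) ⌊y⌋₊ := sum_twinDensity_le_selbergSum
    _ ≤ selbergSum (pairSieve M ⌊y⌋₊ hh) ⌊y⌋₊ * singularFactor h :=
        selbergSum_pairSieve_two_le hh h₀ ((Nat.one_le_floor_iff y).2 hy)

end SieveSum

section SieveLevel

/-- The level `√X / (log X)³` of the sieve, small enough for the remainder to be `O(X / (log X)⁴)`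
and large enough for the Selberg sum to be asymptotically that of level `√X`. -/
noncomputable def sieveLevel (X : ℝ) : ℝ := √X / log X ^ 3

variable {X : ℝ}

theorem sq_sieveLevel (hX : 0 ≤ X) : sieveLevel X ^ 2 = X / log X ^ 6 := by
  rw [sieveLevel, div_pow, sq_sqrt hX, ← pow_mul]

theorem log_sieveLevel (hX : 0 < X) (hL : log X ≠ 0) :
    log (sieveLevel X) = log X / 2 - 3 * log (log X) := by
  rw [sieveLevel, log_div (sqrt_ne_zero'.2 hX) (pow_ne_zero 3 hL), log_sqrt hX.le, log_pow]
  norm_num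

theorem sieve_remainder_le (hX : 0 ≤ X) (hL : 0 < log X) (hy : 1 ≤ sieveLevel X)
    (hlog : 1 + log (sieveLevel X) ≤ log X) :
    (⌊sieveLevel X⌋₊ : ℝ) + (⌊sieveLevel X⌋₊ * (1 + log ⌊sieveLevel X⌋₊)) ^ 2 ≤
      2 * (X / log X ^ 4) := by
  set y := sieveLevel X
  have hzy : (⌊y⌋₊ : ℝ) ≤ y := Nat.floor_le (by linarith)
  have hz : (1 : ℝ) ≤ ⌊y⌋₊ := mod_cast (Nat.one_le_floor_iff y).2 hy
  have hlogz : 0 ≤ log ⌊y⌋₊ := log_nonneg hz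
  have hlogzy : log ⌊y⌋₊ ≤ log y := log_le_log (by linarith) hzy
  have hsq : (⌊y⌋₊ * (1 + log ⌊y⌋₊)) ^ 2 ≤ X / log X ^ 4 :=
    calc (⌊y⌋₊ * (1 + log ⌊y⌋₊)) ^ 2 ≤ (y * log X) ^ 2 := by
          gcongr
          linarith
      _ = X / log X ^ 6 * log X ^ 2 := by rw [mul_pow, sq_sieveLevel hX]
      _ = X / log X ^ 4 := by field_simp
  have hle : (⌊y⌋₊ : ℝ) ≤ (⌊y⌋₊ * (1 + log ⌊y⌋₊)) ^ 2 := by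
    have hmul : (⌊y⌋₊ : ℝ) ≤ ⌊y⌋₊ * (1 + log ⌊y⌋₊) :=
      le_mul_of_one_le_right (by linarith) (by linarith)
    exact hmul.trans (le_self_pow₀ (by linarith) two_ne_zero)
  linarith

theorem one_le_one_add_six_mul_mul_sq {s : ℝ} (h₀ : 0 ≤ s) (h₁ : s ≤ 1 / 2) :
    1 ≤ (1 + 6 * s) * (1 - s) ^ 2 := by
  have : 0 ≤ s * ((1 - 2 * s) * (4 - 3 * s)) :=
    mul_nonneg h₀ (mul_nonneg (by linarith) (by linarith))
  linarith [(by ring : (1 + 6 * s) * (1 - s) ^ 2 - 1 = s * ((1 - 2 * s) * (4 - 3 * s)))]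

/-- The relative loss, in the main term of the sieve of level `sieveLevel X`, compared with the main
term of level `√X`. -/
noncomputable def sieveLoss (X : ℝ) : ℝ := (6 + 2 * twinShift) * log (log X) / log X

theorem sieveLoss_nonneg (hL : 0 ≤ log X) (hl : 0 ≤ log (log X)) : 0 ≤ sieveLoss X := by
  have := twinShift_nonneg
  rw [sieveLoss]
  positivity

theorem sq_log_le_mul_log_sieveLevel_mul (hX : 1 < X) (hl : 1 ≤ log (log X))
    (hs : sieveLoss X ≤ 1 / 2) :
    log X ^ 2 ≤ 4 * (1 + 6 * sieveLoss X) *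
      (log (sieveLevel X) * (log (sieveLevel X) - twinShift)) := by
  have hL := log_pos hX
  have hs₀ := sieveLoss_nonneg hL.le (by linarith)
  have hD := le_mul_of_one_le_right twinShift_nonneg hl
  have hlog : log X / 2 * (1 - sieveLoss X) =
      log (sieveLevel X) - twinShift * log (log X) := by
    rw [log_sieveLevel (by linarith) hL.ne', sieveLoss]
    field_simp
    ring
  have hpos : 0 ≤ log X / 2 * (1 - sieveLoss X) := mul_nonneg (by linarith) (by linarith)
  have := twinShift_nonneg
  calc log X ^ 2 ≤ log X ^ 2 * ((1 + 6 * sieveLoss X) * (1 - sieveLoss X) ^ 2) :=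
        le_mul_of_one_le_right (sq_nonneg _)
          (one_le_one_add_six_mul_mul_sq hs₀ hs)
    _ = 4 * (1 + 6 * sieveLoss X) *
          (log X / 2 * (1 - sieveLoss X) * (log X / 2 * (1 - sieveLoss X))) := by ring
    _ ≤ 4 * (1 + 6 * sieveLoss X) *
          (log (sieveLevel X) * (log (sieveLevel X) - twinShift)) := by
        gcongr <;> linarith

theorem one_le_sieveLevel (hX : 1 < X) (hl : 0 ≤ log (log X)) (hs : sieveLoss X ≤ 1 / 2) :
    1 ≤ sieveLevel X := by
  have hL := log_pos hX
  rw [sieveLoss, div_le_iff₀ hL] at hs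
  have hpos : 0 < sieveLevel X := div_pos (sqrt_pos.2 (by linarith)) (pow_pos hL 3)
  rw [← log_nonneg_iff hpos, log_sieveLevel (by linarith) hL.ne']
  nlinarith [mul_nonneg twinShift_nonneg hl]

theorem eventually_sieveLoss_le : ∀ᶠ X in Filter.atTop, sieveLoss X ≤ 1 / 2 := by
  have hlim : Filter.Tendsto (fun L ↦ (6 + 2 * twinShift) * (log L / L)) Filter.atTop
      (nhds ((6 + 2 * twinShift) * 0)) :=
    isLittleO_log_id_atTop.tendsto_div_nhds_zero.const_mul _
  rw [mul_zero] at hlim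
  filter_upwards [(hlim.comp tendsto_log_atTop).eventually_le_const one_half_pos] with X hX
  rwa [sieveLoss, mul_div_assoc]

end SieveLevel

section UpperBound

variable {X : ℝ} {h : ℕ}

theorem div_selbergSum_le (hh : 2 ∣ h) (h₀ : h ≠ 0) (hX : 1 < X) (hl : 1 ≤ log (log X))
    (hs : sieveLoss X ≤ 1 / 2) :
    ⌊X⌋₊ / selbergSum (pairSieve ⌊X⌋₊ ⌊sieveLevel X⌋₊ hh) ⌊sieveLevel X⌋₊ ≤
      16 * twinConst * singularFactor h * (X / log X ^ 2) * (1 + 6 * sieveLoss X) := by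
  have hL := log_pos hX
  have hy := one_le_sieveLevel hX (by linarith) hs
  have hs₀ := sieveLoss_nonneg hL.le (by linarith)
  have h𝔖 := twinConst_pos
  have hlower := log_mul_log_sub_le_selbergSum (M := ⌊X⌋₊) hh h₀ hy
  have hG := selbergSum_pos (s := pairSieve ⌊X⌋₊ ⌊sieveLevel X⌋₊ hh) ((Nat.one_le_floor_iff _).2 hy)
  set G := selbergSum (pairSieve ⌊X⌋₊ ⌊sieveLevel X⌋₊ hh) ⌊sieveLevel X⌋₊
  have hsq : log X ^ 2 ≤ 16 * twinConst * singularFactor h * (1 + 6 * sieveLoss X) * G :=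
    calc log X ^ 2 ≤ 4 * (1 + 6 * sieveLoss X) *
          (log (sieveLevel X) * (log (sieveLevel X) - twinShift)) :=
          sq_log_le_mul_log_sieveLevel_mul hX hl hs
      _ ≤ 4 * (1 + 6 * sieveLoss X) * (G * singularFactor h * (4 * twinConst)) := by
          exact mul_le_mul_of_nonneg_left ((div_le_iff₀ (by positivity)).1 hlower) (by positivity)
      _ = 16 * twinConst * singularFactor h * (1 + 6 * sieveLoss X) * G := by ring
  rw [div_le_iff₀ hG]
  calc (⌊X⌋₊ : ℝ) ≤ X := Nat.floor_le (by linarith)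
    _ = X / log X ^ 2 * log X ^ 2 := by field_simp
    _ ≤ X / log X ^ 2 * (16 * twinConst * singularFactor h * (1 + 6 * sieveLoss X) * G) := by
        gcongr
    _ = 16 * twinConst * singularFactor h * (X / log X ^ 2) * (1 + 6 * sieveLoss X) * G := by ring

theorem card_primePairs_le_of_sieveLoss_le (hh : 2 ∣ h) (h₀ : 0 < h) (hX : 1 < X)
    (hl : 1 ≤ log (log X)) (hs : sieveLoss X ≤ 1 / 2) :
    #(primePairs h ⌊X⌋₊) ≤ 16 * twinConst * singularFactor h * (X / log X ^ 2) *
      (1 + (6 * (6 + 2 * twinShift) + 1 / (8 * twinConst)) * (log (log X) / log X)) := by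
  have hL := log_pos hX
  have hy := one_le_sieveLevel hX (by linarith) hs
  have hlog : 1 + log (sieveLevel X) ≤ log X := by
    rw [log_sieveLevel (by linarith) hL.ne']
    linarith [log_le_sub_one_of_pos hL]
  have hF := one_le_singularFactor h
  have h𝔖 := twinConst_pos
  have hrem : 2 * (X / log X ^ 4) ≤ 16 * twinConst * singularFactor h * (X / log X ^ 2) *
      (1 / (8 * twinConst) * (log (log X) / log X)) :=
    calc 2 * (X / log X ^ 4) ≤ 2 * (X / log X ^ 4) * (singularFactor h * log (log X) * log X) := by
          refine le_mul_of_one_le_right (by positivity) ?_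
          have := log_le_sub_one_of_pos hL
          exact one_le_mul_of_one_le_of_one_le (one_le_mul_of_one_le_of_one_le hF hl) (by linarith)
      _ = _ := by field_simp; ring
  have hmain := div_selbergSum_le hh h₀.ne' hX hl hs
  have herr := sieve_remainder_le (by linarith) hL hy hlog
  have hcard := card_primePairs_le (M := ⌊X⌋₊) hh h₀ ((Nat.one_le_floor_iff _).2 hy)
  calc (#(primePairs h ⌊X⌋₊) : ℝ)
      ≤ 16 * twinConst * singularFactor h * (X / log X ^ 2) * (1 + 6 * sieveLoss X) +
          16 * twinConst * singularFactor h * (X / log X ^ 2) *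
            (1 / (8 * twinConst) * (log (log X) / log X)) := by linarith
    _ = _ := by rw [sieveLoss]; ring

theorem exists_eventually_card_primePairs_le :
    ∃ K : ℝ, 0 < K ∧ ∀ᶠ X in Filter.atTop, ∀ h : ℕ, 2 ∣ h → 0 < h →
      #(primePairs h ⌊X⌋₊) ≤ 16 * twinConst * singularFactor h * (X / log X ^ 2) *
        (1 + K * (log (log X) / log X)) := by
  have := twinConst_pos
  have := twinShift_nonneg
  refine ⟨6 * (6 + 2 * twinShift) + 1 / (8 * twinConst), by positivity, ?_⟩
  have hloglog := tendsto_log_atTop.comp tendsto_log_atTop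
  filter_upwards [eventually_sieveLoss_le, hloglog.eventually_ge_atTop 1,
    Filter.eventually_gt_atTop 1] with X hs hl hX h hh h₀
  exact card_primePairs_le_of_sieveLoss_le hh h₀ hX hl hs

theorem log_log_div_log_le {c x y : ℝ} (hc : 0 < c) (hx : exp 1 ≤ x) (hy : 1 < y) (hyx : y ≤ x)
    (hlog : c * log x ≤ log y) :
    log (log y) / log y ≤ log (log x) / (c * log x) := by
  have hx₀ := (exp_pos 1).trans_le hx
  have hlogx : 1 ≤ log x := (le_log_iff_exp_le hx₀).2 hx
  have := log_pos hy
  gcongr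
  exact log_nonneg hlogx

theorem rpow_le_div_of_lt_rpow_one_sub {c x h : ℝ} (hx : 0 < x) (hh : 0 < h)
    (hhx : h < x ^ (1 - c)) : x ^ c ≤ x / h := by
  rw [le_div_iff₀ hh]
  calc x ^ c * h ≤ x ^ c * x ^ (1 - c) := by gcongr
    _ = x := by rw [← rpow_add hx, add_sub_cancel, rpow_one]

theorem filter_prime_subset_primePairs (Y : ℝ) :
    {q ∈ range (⌊Y⌋₊ + 1) | 2 < q ∧ ((q : ℕ) : ℝ) < Y ∧ q.Prime ∧ (q * h + 1).Prime} ⊆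
      primePairs h ⌊Y⌋₊ := by
  intro q hq
  obtain ⟨hq, -, -, hprime⟩ := mem_filter.1 hq
  exact mem_filter.2 ⟨mem_Ioc.2 ⟨hprime.1.pos, mem_range_succ_iff.1 hq⟩, hprime⟩

theorem sieve_bound_qh_add_one_general (c : ℝ) (hc : 0 < c) :
    ∃ C : ℝ, 0 < C ∧ ∃ x₀ : ℝ, ∀ x ≥ x₀,
      ∀ h : ℕ, 2 ∣ h → 2 ≤ h → (h : ℝ) < x ^ (1 - c) →
        (((Finset.range (⌊x / h⌋₊ + 1)).filter
            (fun q : ℕ => 2 < q ∧ (q : ℝ) < x / h ∧ q.Prime ∧ (q * h + 1).Prime)).card : ℝ) ≤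
          16 * twinConst *
            (∏ p ∈ h.primeFactors.filter (fun p => 2 < p), (1 + 1 / ((p : ℝ) - 2))) *
            ((x / h) / (Real.log (x / h)) ^ 2) *
            (1 + C * Real.log (Real.log x) / Real.log x) := by
  obtain ⟨K, hK, hbound⟩ := exists_eventually_card_primePairs_le
  refine ⟨K / c, by positivity, Filter.eventually_atTop.1 ?_⟩
  filter_upwards [(tendsto_rpow_atTop hc).eventually
    (Filter.eventually_forall_ge_atTop.2 hbound), Filter.eventually_ge_atTop (exp 1)]
    with x hx hx₁ h hh h₂ hhx
  have hx₀ : 0 < x := (exp_pos 1).trans_le hx₁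
  have hh₀ : (1 : ℝ) ≤ h := mod_cast one_le_two.trans h₂
  have hlow := rpow_le_div_of_lt_rpow_one_sub hx₀ (by linarith) hhx
  have hone : 1 < x ^ c := one_lt_rpow ((one_lt_exp_iff.2 one_pos).trans_le hx₁) hc
  have hlog : c * log x ≤ log (x / h) := by
    rw [← log_rpow hx₀]
    exact log_le_log (by linarith) hlow
  have hratio := log_log_div_log_le hc hx₁ (hone.trans_le hlow) (div_le_self hx₀.le hh₀) hlog
  have hF := one_le_singularFactor h
  have h𝔖 := twinConst_pos
  calc _ ≤ (#(primePairs h ⌊x / h⌋₊) : ℝ) :=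
        mod_cast card_le_card (filter_prime_subset_primePairs (x / h))
    _ ≤ _ := hx _ hlow h hh (by lia)
    _ ≤ 16 * twinConst * singularFactor h * (x / h / log (x / h) ^ 2) *
        (1 + K * (log (log x) / (c * log x))) := by gcongr
    _ = _ := by rw [singularFactor]; field_simp

end UpperBound

/-- Sieve bound for the number of primes `2 < q < x/h` with `qh + 1` also prime. -/
theorem sieve_bound_qh_add_one (c : ℝ) (hc1 : 1 / 2 ≤ c) (hc2 : c < 1) :
    ∃ C : ℝ, 0 < C ∧ ∃ x₀ : ℝ, ∀ x ≥ x₀,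
      ∀ h : ℕ, 2 ∣ h → 2 ≤ h → (h : ℝ) < x ^ (1 - c) →
        (((Finset.range (⌊x / h⌋₊ + 1)).filter
            (fun q : ℕ => 2 < q ∧ (q : ℝ) < x / h ∧ q.Prime ∧ (q * h + 1).Prime)).card : ℝ) ≤
          16 * twinConst *
            (∏ p ∈ h.primeFactors.filter (fun p => 2 < p), (1 + 1 / ((p : ℝ) - 2))) *
            ((x / h) / (Real.log (x / h)) ^ 2) *
            (1 + C * Real.log (Real.log x) / Real.log x) :=
  sieve_bound_qh_add_one_general c (by linarith)
end

section
/- For every positive integer h, ∏_{p | h, p > 2} (1 + 1/(p − 2)) ≤ 2·∏_{p | h, p > 2} (1 + 1/p), where both products range over the odd prime divisors of h and an empty product equals 1. -/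
open Real Finset

attribute [local instance] Classical.propDecidable

/-!
List the odd primes dividing `h` as `p₁ < p₂ < ⋯ < pₖ`. Since `pᵢ ≤ pᵢ₊₁ - 2`, each factor
`1 + 1 / (pᵢ₊₁ - 2)` on the left is at most the factor `1 + 1 / pᵢ` on the right, one index earlier.
The first factor on the left is at most `2`, and the last factor on the right is at least `1`.
-/

theorem prod_le_mul_prod_of_le_of_lt {ι R : Type*} [LinearOrder ι] [CommSemiring R]
    [PartialOrder R] [IsOrderedRing R] {s : Finset ι} {f g : ι → R} {c : R}
    (hf : ∀ i ∈ s, 0 ≤ f i) (hg : ∀ i ∈ s, 1 ≤ g i) (hc : 1 ≤ c) (hfc : ∀ i ∈ s, f i ≤ c)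
    (hfg : ∀ i ∈ s, ∀ j ∈ s, i < j → f j ≤ g i) :
    ∏ i ∈ s, f i ≤ c * ∏ i ∈ s, g i := by
  -- Removing the least index `i` replaces the bound `c` by `g i`.
  induction s using Finset.induction_on_min generalizing c with
  | empty => simpa using hc
  | insert i t hit ih =>
    have hi : i ∉ t := fun h => (hit i h).false
    simp only [mem_insert, forall_eq_or_imp] at hf hg hfc hfg
    have htail : ∏ j ∈ t, f j ≤ g i * ∏ j ∈ t, g j :=
      ih hf.2 hg.2 hg.1 (fun j hj => hfg.1.2 j hj (hit j hj)) fun j hj => (hfg.2 j hj).2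
    rw [prod_insert hi, prod_insert hi]
    exact mul_le_mul hfc.1 htail (prod_nonneg hf.2) (zero_le_one.trans hc)

theorem prod_one_add_inv_sub_two_le_general {ι K : Type*} [LinearOrder ι] [Field K]
    [LinearOrder K] [IsStrictOrderedRing K] {s : Finset ι} {a : ι → K}
    (ha : ∀ i ∈ s, 3 ≤ a i) (hgap : ∀ i ∈ s, ∀ j ∈ s, i < j → a i + 2 ≤ a j) :
    ∏ i ∈ s, (1 + 1 / (a i - 2)) ≤ 2 * ∏ i ∈ s, (1 + 1 / a i) := by
  have hpos : ∀ i ∈ s, 0 < a i := fun i hi => by linarith [ha i hi]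
  have hsub : ∀ i ∈ s, 1 ≤ a i - 2 := fun i hi => by linarith [ha i hi]
  refine prod_le_mul_prod_of_le_of_lt (fun i hi => ?_) (fun i hi => ?_) one_le_two
    (fun i hi => ?_) fun i hi j hj hij => ?_
  · have := zero_le_one.trans (hsub i hi)
    positivity
  · have := hpos i hi
    simp only [le_add_iff_nonneg_right]
    positivity
  · linarith [div_le_one_of_le₀ (hsub i hi) (zero_le_one.trans (hsub i hi))]
  · gcongr
    · exact hpos i hi
    · exact le_sub_iff_add_le.2 (hgap i hi j hj hij)

theorem add_two_le_of_prime_of_lt {p q : ℕ} (hp : p.Prime) (hq : q.Prime) (h2p : 2 < p)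
    (hpq : p < q) : p + 2 ≤ q := by
  obtain ⟨m, rfl⟩ := hp.odd_of_ne_two h2p.ne'
  obtain ⟨n, rfl⟩ := hq.odd_of_ne_two (h2p.trans hpq).ne'
  omega

/-- For every positive integer `h`,
`∏_{p ∣ h, p > 2} (1 + 1/(p − 2)) ≤ 2 · ∏_{p ∣ h, p > 2} (1 + 1/p)`. -/
theorem prod_one_add_inv_sub_two_le (h : ℕ) (hh : 0 < h) :
    (∏ p ∈ h.primeFactors.filter (fun p => 2 < p), (1 + 1 / ((p : ℝ) - 2))) ≤
      2 * ∏ p ∈ h.primeFactors.filter (fun p => 2 < p), (1 + 1 / (p : ℝ)) := by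
  have hprime : ∀ p ∈ h.primeFactors.filter (fun p => 2 < p), p.Prime ∧ 2 < p := fun p hp =>
    (mem_filter.1 hp).imp_left Nat.prime_of_mem_primeFactors
  exact prod_one_add_inv_sub_two_le_general (fun p hp => by exact_mod_cast (hprime p hp).2)
    fun p hp q hq hpq => by
      exact_mod_cast add_two_le_of_prime_of_lt (hprime p hp).1 (hprime q hq).1 (hprime p hp).2 hpq
end
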